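/- arXiv:1309.1974 — 2 statements merged into one kernel-verified Lean document; each statement's English description precedes it below -/
import Mathlib

section
/- Let 1 ≤ n < α, let p ∈ (n/α, 1), and let q be defined by 1/q = 1/p − α/n (so q < 0). Then there exists a constant C = C(n, α, p) > 0 such that for all nonnegative f ∈ L^p(ℝⁿ), ‖I_α f‖_{L^q(ℝⁿ)} ≥ C‖f‖_{L^p(ℝⁿ)}. -/
open MeasureTheory ENNReal

/-- The Riesz-type integral operator `I_α f(x) = ∫_{ℝⁿ} f(y) |x-y|^(α-n) dy` for `α > n`,
valued in `ℝ≥0∞`. -/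
noncomputable def rieszNeg (n : ℕ) (α : ℝ) (f : EuclideanSpace ℝ (Fin n) → ℝ)
    (x : EuclideanSpace ℝ (Fin n)) : ℝ≥0∞ :=
  ∫⁻ y, ENNReal.ofReal (f y * dist x y ^ (α - n))

lemma aux_rpow {z : ℝ} (hz : z ≤ 0) {a b : ℝ≥0∞} (h : a ≤ b) : b ^ z ≤ a ^ z := by
  have h1 := ENNReal.rpow_le_rpow h (neg_nonneg.2 hz)
  rw [ENNReal.rpow_neg, ENNReal.rpow_neg] at h1
  exact ENNReal.inv_le_inv.1 h1

lemma aux_K (n : ℕ) (l s : ℝ) (hl : 0 < l) (hs : l * s < -n) (hs0 : s < 0) :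
    ∃ K : ℝ, 0 < K ∧ ∀ m A : ℝ, 0 < m → 0 < A → ∀ x0 : EuclideanSpace ℝ (Fin n),
      ∫⁻ x, ENNReal.ofReal ((m + A * dist x0 x ^ l) ^ s) ≤
        ENNReal.ofReal (K * m ^ s * (m / A) ^ (n / l)) := by
  set g : EuclideanSpace ℝ (Fin n) → ℝ := fun x => (1 + ‖x‖ ^ l) ^ s with hg
  have hgc : Continuous g := by
    refine Continuous.rpow_const ?_ ?_
    · exact continuous_const.add (continuous_norm.rpow_const fun x => Or.inr hl.le)
    · intro x; left
      positivity
  have hgi : Integrable g := by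
    have h1 : Integrable (fun x : EuclideanSpace ℝ (Fin n) => (1 + ‖x‖) ^ (-(-(l * s)))) := by
      apply integrable_one_add_norm
      simp; linarith
    refine (h1.const_mul ((2 ^ l) ^ (-s))).mono' hgc.aestronglyMeasurable (Filter.Eventually.of_forall fun x => ?_)
    have hx := norm_nonneg x
    have hxl := Real.rpow_nonneg hx l
    rw [Real.norm_of_nonneg (by positivity)]
    have h2 : (1 + ‖x‖) ^ l ≤ 2 ^ l * (1 + ‖x‖ ^ l) := by
      rcases le_total ‖x‖ 1 with h | h
      · calc (1 + ‖x‖) ^ l ≤ 2 ^ l := Real.rpow_le_rpow (by positivity) (by linarith) hl.le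
          _ ≤ _ := le_mul_of_one_le_right (by positivity) (by linarith)
      · calc (1 + ‖x‖) ^ l ≤ (2 * ‖x‖) ^ l := Real.rpow_le_rpow (by positivity) (by linarith) hl.le
          _ = 2 ^ l * ‖x‖ ^ l := Real.mul_rpow (by norm_num) hx
          _ ≤ _ := by gcongr; linarith
    have h3 : (2 ^ l * (1 + ‖x‖ ^ l)) ^ s ≤ ((1 + ‖x‖) ^ l) ^ s :=
      Real.rpow_le_rpow_of_nonpos (by positivity) h2 hs0.le
    rw [Real.mul_rpow (by positivity) (by positivity), ← Real.rpow_mul (by positivity : (0:ℝ) ≤ 1 + ‖x‖)] at h3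
    have h4 : ((2:ℝ) ^ l) ^ (-s) * (2 ^ l) ^ s = 1 := by
      rw [← Real.rpow_add (by positivity)]; simp
    simp only [neg_neg]
    calc g x = ((2:ℝ) ^ l) ^ (-s) * ((2 ^ l) ^ s * (1 + ‖x‖ ^ l) ^ s) := by
          rw [← mul_assoc, h4, one_mul]
      _ ≤ _ := by gcongr
  have hg0 : ∀ x, 0 ≤ g x := fun x => by
    have := Real.rpow_nonneg (norm_nonneg x) l
    simp only [hg]; positivity
  have hgn : 0 ≤ ∫ x, g x := integral_nonneg fun x => hg0 x
  refine ⟨(∫ x, g x) + 1, by linarith, ?_⟩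
  intro m A hm hA x0
  set R : ℝ := (A / m) ^ (1 / l) with hR
  have hR0 : 0 < R := by positivity
  have hRl : R ^ l = A / m := by
    rw [hR, ← Real.rpow_mul (by positivity), one_div, inv_mul_cancel₀ hl.ne', Real.rpow_one]
  have key : ∀ x : EuclideanSpace ℝ (Fin n), (m + A * dist x0 x ^ l) ^ s = m ^ s * g (R • (x - x0)) := by
    intro x
    have := Real.rpow_nonneg (norm_nonneg (x - x0)) l
    simp only [hg]
    rw [← Real.mul_rpow hm.le (by positivity), norm_smul, Real.norm_of_nonneg hR0.le,
      Real.mul_rpow hR0.le (norm_nonneg _), hRl, dist_comm, dist_eq_norm]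
    congr 1
    field_simp
  simp_rw [key]
  have hi : Integrable (fun x : EuclideanSpace ℝ (Fin n) => m ^ s * g (R • (x - x0))) :=
    (((hgi.comp_smul hR0.ne').comp_sub_right x0)).const_mul _
  rw [← ofReal_integral_eq_lintegral_ofReal hi (Filter.Eventually.of_forall fun x => mul_nonneg (by positivity) (hg0 _))]
  apply ENNReal.ofReal_le_ofReal
  rw [integral_const_mul, integral_sub_right_eq_self (fun x => g (R • x)) x0, Measure.integral_comp_smul]
  have h5 : |(R ^ Module.finrank ℝ (EuclideanSpace ℝ (Fin n)))⁻¹| = (m / A) ^ (n / l) := by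
    rw [abs_of_pos (by positivity), finrank_euclideanSpace_fin, ← Real.rpow_natCast, hR, ← Real.rpow_mul (by positivity),
      ← Real.inv_rpow (by positivity), inv_div]
    congr 1; ring
  rw [h5, smul_eq_mul]
  have : 0 < m ^ s * (m / A) ^ (n / l) := by positivity
  nlinarith

lemma aux_holder (n : ℕ) (l p : ℝ) (hl : 0 < l) (hp0 : 0 < p) (hp1 : p < 1)
    (hlp : n < p * (l + n)) :
    ∃ K : ℝ, 0 < K ∧ ∀ m A : ℝ, 0 < m → 0 < A → ∀ x0 : EuclideanSpace ℝ (Fin n),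
      ∀ f : EuclideanSpace ℝ (Fin n) → ℝ, Measurable f → (∀ x, 0 ≤ f x) →
      ∫⁻ y, ENNReal.ofReal (f y) = ENNReal.ofReal A →
      ∫⁻ y, ENNReal.ofReal (f y * dist x0 y ^ l) = ENNReal.ofReal m →
      (∫ y, |f y| ^ p) ^ (1 / p) ≤ K * (A * (m / A) ^ (n * (1 / p - 1) / l)) := by
  have h1p : 0 < 1 - p := by linarith
  obtain ⟨K, hK, H⟩ := aux_K n l (-(p / (1 - p))) hl (by
    rw [mul_neg, neg_lt_neg_iff, ← mul_div_assoc, lt_div_iff₀ h1p]; nlinarith) (by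
    have : 0 < p / (1 - p) := by positivity
    linarith)
  refine ⟨2 * K ^ (1 / p - 1), by positivity, ?_⟩
  intro m A hm hA x0 f hf hf0 hfA hfm
  set w : EuclideanSpace ℝ (Fin n) → ℝ := fun y => m + A * dist x0 y ^ l with hw
  have hw0 : ∀ y, 0 < w y := fun y => by
    have := Real.rpow_nonneg (dist_nonneg (x := x0) (y := y)) l
    simp only [hw]; positivity
  have hwm : Measurable w := by simp only [hw]; fun_prop
  have e1 : ∫⁻ y, ENNReal.ofReal (f y * w y) = ENNReal.ofReal (2 * m * A) := by
    have : ∀ y, ENNReal.ofReal (f y * w y) = ENNReal.ofReal m * ENNReal.ofReal (f y) +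
        ENNReal.ofReal A * ENNReal.ofReal (f y * dist x0 y ^ l) := by
      intro y
      have h1 := hf0 y
      have h2 := Real.rpow_nonneg (dist_nonneg (x := x0) (y := y)) l
      rw [← ENNReal.ofReal_mul hm.le, ← ENNReal.ofReal_mul hA.le, ← ENNReal.ofReal_add (by positivity) (by positivity)]
      congr 1; simp only [hw]; ring
    simp_rw [this]
    rw [lintegral_add_left (by fun_prop), lintegral_const_mul _ (by fun_prop), lintegral_const_mul _ (by fun_prop), hfA, hfm,
      ← ENNReal.ofReal_mul hm.le, ← ENNReal.ofReal_mul hA.le, ← ENNReal.ofReal_add (by positivity) (by positivity)]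
    congr 1; ring
  have hold := ENNReal.lintegral_mul_le_Lp_mul_Lq (μ := volume) (p := 1 / p) (q := 1 / (1 - p))
    (by
      rw [Real.holderConjugate_iff]
      exact ⟨by rw [lt_div_iff₀ hp0]; linarith, by simp⟩)
    (f := fun y => ENNReal.ofReal ((f y * w y) ^ p)) (g := fun y => ENNReal.ofReal (w y ^ (-p)))
    (by fun_prop) (by fun_prop)
  have e2 : ∀ y, ENNReal.ofReal ((f y * w y) ^ p) ^ (1 / p) = ENNReal.ofReal (f y * w y) := by
    intro y
    have h1 := mul_nonneg (hf0 y) (hw0 y).le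
    rw [ENNReal.ofReal_rpow_of_nonneg (by positivity) (by positivity), ← Real.rpow_mul h1]
    field_simp; simp
  have e3 : ∀ y, ENNReal.ofReal (w y ^ (-p)) ^ (1 / (1 - p)) = ENNReal.ofReal (w y ^ (-(p / (1 - p)))) := by
    intro y
    have h1 := hw0 y
    rw [ENNReal.ofReal_rpow_of_nonneg (by positivity) (by positivity), ← Real.rpow_mul h1.le]
    congr 2; ring
  have e4 : ∀ y, ENNReal.ofReal ((f y * w y) ^ p) * ENNReal.ofReal (w y ^ (-p)) = ENNReal.ofReal (|f y| ^ p) := by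
    intro y
    have h1 := hf0 y
    have h2 := hw0 y
    rw [← ENNReal.ofReal_mul (by positivity), Real.mul_rpow h1 h2.le, mul_assoc, ← Real.rpow_add h2, abs_of_nonneg h1]
    simp
  simp only [Pi.mul_apply, e2, e3, e4, one_div_one_div] at hold
  rw [e1] at hold
  have hold2 := hold.trans (mul_le_mul_right (ENNReal.rpow_le_rpow (H m A hm hA x0) h1p.le) _)
  rw [ENNReal.ofReal_rpow_of_nonneg (by positivity) (by positivity), ENNReal.ofReal_rpow_of_nonneg (by positivity) (by positivity),
    ← ENNReal.ofReal_mul (by positivity)] at hold2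
  have h6 : ∫ y, |f y| ^ p ≤ (2 * m * A) ^ p * (K * m ^ (-(p / (1 - p))) * (m / A) ^ (n / l)) ^ (1 - p) := by
    rw [integral_eq_lintegral_of_nonneg_ae (Filter.Eventually.of_forall fun y => by positivity)
      (by have h : Measurable (fun y => |f y| ^ p) := (measurable_norm.comp hf).pow_const p
          exact h.aestronglyMeasurable)]
    exact ENNReal.toReal_le_of_le_ofReal (by positivity) hold2
  have hF0 : 0 ≤ ∫ y, |f y| ^ p := integral_nonneg fun y => by positivity
  refine (Real.rpow_le_rpow hF0 h6 (by positivity)).trans (le_of_eq ?_)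
  set r := m / A with hr
  have hr0 : 0 < r := by positivity
  rw [Real.mul_rpow (by positivity) (by positivity), ← Real.rpow_mul (by positivity), ← Real.rpow_mul (by positivity)]
  have i1 : p * (1 / p) = 1 := by field_simp
  have i2 : (1 - p) * (1 / p) = 1 / p - 1 := by field_simp
  rw [i1, i2, Real.rpow_one, Real.mul_rpow (by positivity) (by positivity), Real.mul_rpow (by positivity) (by positivity),
    ← Real.rpow_mul hm.le, ← Real.rpow_mul hr0.le]
  have i3 : -(p / (1 - p)) * (1 / p - 1) = -1 := by field_simp
  have i4 : (n:ℝ) / l * (1 / p - 1) = n * (1 / p - 1) / l := by ring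
  rw [i3, i4, Real.rpow_neg_one]
  field_simp

lemma aux_sum (n : ℕ) (l : ℝ) (hl : 0 < l) (f : EuclideanSpace ℝ (Fin n) → ℝ) (hf : Measurable f)
    (hf0 : ∀ x, 0 ≤ f x) (x x0 : EuclideanSpace ℝ (Fin n)) :
    ENNReal.ofReal ((dist x0 x / 2) ^ l) * ∫⁻ y, ENNReal.ofReal (f y) ≤
      (∫⁻ y, ENNReal.ofReal (f y * dist x y ^ l)) + ∫⁻ y, ENNReal.ofReal (f y * dist x0 y ^ l) := by
  rw [← lintegral_add_left (by fun_prop), ← lintegral_const_mul _ (by fun_prop)]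
  apply lintegral_mono
  intro y
  have h1 := hf0 y
  have h2 := Real.rpow_nonneg (dist_nonneg (x := x0) (y := y)) l
  have h3 := Real.rpow_nonneg (dist_nonneg (x := x) (y := y)) l
  have h4 : (0:ℝ) ≤ (dist x0 x / 2) ^ l := by positivity
  simp only
  rw [← ENNReal.ofReal_mul h4, ← ENNReal.ofReal_add (by positivity) (by positivity)]
  apply ENNReal.ofReal_le_ofReal
  rw [← mul_add, mul_comm]
  apply mul_le_mul_of_nonneg_left _ h1
  have ht := dist_triangle_right x0 x y
  rcases le_total (dist x0 y) (dist x y) with h | h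
  · have := Real.rpow_le_rpow (by positivity) (by linarith : dist x0 x / 2 ≤ dist x y) hl.le
    linarith
  · have := Real.rpow_le_rpow (by positivity) (by linarith : dist x0 x / 2 ≤ dist x0 y) hl.le
    linarith

/-- **Reversed HLS inequality, operator form with rough constant** (Proposition 2.2):
for `1 ≤ n < α`, `n/α < p < 1` and `1/q = 1/p - α/n` (so `q < 0`), there is a constant
`C(n, α, p) > 0` such that `‖I_α f‖_{L^q(ℝⁿ)} ≥ C ‖f‖_{L^p(ℝⁿ)}` for all nonnegative
`f ∈ L^p(ℝⁿ)`. -/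
theorem reversed_HLS_operator_form (n : ℕ) (hn : 1 ≤ n) (α p q : ℝ)
    (hα : (n : ℝ) < α) (hp0 : (n : ℝ) / α < p) (hp1 : p < 1)
    (hq : 1 / q = 1 / p - α / n) :
    (q < 0) ∧ ∃ C : ℝ, 0 < C ∧ ∀ f : EuclideanSpace ℝ (Fin n) → ℝ,
      Measurable f → (∀ x, 0 ≤ f x) → Integrable (fun x => |f x| ^ p) →
        ENNReal.ofReal (C * (∫ x, |f x| ^ p) ^ (1 / p)) ≤
          (∫⁻ x, (rieszNeg n α f x) ^ q) ^ (1 / q) := by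
  have hn0 : (0:ℝ) < n := by exact_mod_cast hn
  have hα0 : 0 < α := hn0.trans hα
  have hp : 0 < p := (div_pos hn0 hα0).trans hp0
  have hnp : n < p * α := by rwa [div_lt_iff₀ hα0] at hp0
  have hq0 : q < 0 := by
    rw [← one_div_neg, hq, sub_neg, div_lt_div_iff₀ hp hn0]; linarith
  refine ⟨hq0, ?_⟩
  have hl : 0 < α - n := by linarith
  set l := α - n with hl_def
  have hp1' : 0 < 1 / p - 1 := by rw [sub_pos, lt_div_iff₀ hp]; linarith
  have hq' : 1 / q = (1 / p - 1) - l / n := by rw [hq, hl_def]; field_simp; ring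
  have hlq : l * q < -n := by
    have h : -(l / n) < 1 / q := by linarith
    have h2 := mul_lt_mul_of_neg_right h hq0
    rw [one_div_mul_cancel hq0.ne] at h2
    have h3 := mul_lt_mul_of_pos_left h2 hn0
    have h4 : (n:ℝ) * (-(l / n) * q) = - (l * q) := by field_simp
    linarith
  obtain ⟨K1, hK1, H1⟩ := aux_holder n l p hl hp hp1 (by rw [hl_def]; simpa using hnp)
  obtain ⟨K2, hK2, H2⟩ := aux_K n l q hl hlq hq0
  set β : ℝ := n * (1 / p - 1) / l with hβ
  have hβ0 : 0 < β := by positivity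
  set c : ℝ := (1 / 2) ^ l / 5 with hc
  have hc0 : 0 < c := by positivity
  refine ⟨c * K2 ^ (1 / q) / K1, by positivity, ?_⟩
  intro f hf hf0 hfi
  have hIdef : ∀ x, rieszNeg n α f x = ∫⁻ y, ENNReal.ofReal (f y * dist x y ^ l) := fun x => rfl
  set I := rieszNeg n α f with hI
  set F := ∫ x, |f x| ^ p with hF
  have hF0 : 0 ≤ F := integral_nonneg fun y => by positivity
  rcases hF0.eq_or_lt with hFz | hFpos
  · rw [← hFz, Real.zero_rpow (by positivity)]; simp
  have hqinv : 1 / q < 0 := by rwa [one_div_neg]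
  have hne : Nontrivial (EuclideanSpace ℝ (Fin n)) := by
    haveI : Nonempty (Fin n) := ⟨⟨0, hn⟩⟩
    infer_instance
  have hnz : ¬ (f =ᵐ[volume] 0) := by
    intro h
    apply hFpos.ne'
    rw [hF]
    apply integral_eq_zero_of_ae
    filter_upwards [h] with x hx
    simp [hx, hp.ne']
  have hIm : ∀ x, Measurable fun y => ENNReal.ofReal (f y * dist x y ^ l) := fun x => by fun_prop
  -- every value of `I` is nonzero
  have hIne : ∀ x, I x ≠ 0 := by
    intro x h
    rw [hIdef, lintegral_eq_zero_iff (hIm x)] at h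
    apply hnz
    have hx : ∀ᵐ y ∂(volume : Measure (EuclideanSpace ℝ (Fin n))), y ≠ x := by
      simp [ae_iff]
    filter_upwards [h, hx] with y hy hyx
    have hd : 0 < dist x y ^ l := Real.rpow_pos_of_pos (dist_pos.2 hyx.symm) l
    simp only [Pi.zero_apply, ENNReal.ofReal_eq_zero] at hy
    have := hf0 y
    simp only [Pi.zero_apply]
    nlinarith
  have htop : (∀ᵐ x, I x = ⊤) → ENNReal.ofReal (c * K2 ^ (1 / q) / K1 * F ^ (1 / p)) ≤
      (∫⁻ x, I x ^ q) ^ (1 / q) := by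
    intro h
    have : ∫⁻ x, I x ^ q = 0 := by
      rw [← lintegral_zero (μ := volume) (α := EuclideanSpace ℝ (Fin n))]
      apply lintegral_congr_ae
      filter_upwards [h] with x hx
      rw [hx, ENNReal.top_rpow_of_neg hq0]
    rw [this, ENNReal.zero_rpow_of_neg hqinv]
    exact le_top
  by_cases hall : ∀ x, I x = ⊤
  · exact htop (Filter.Eventually.of_forall hall)
  push Not at hall
  obtain ⟨x1, hx1⟩ := hall
  by_cases hA : ∫⁻ y, ENNReal.ofReal (f y) = ⊤
  · apply htop
    have hx : ∀ᵐ y ∂(volume : Measure (EuclideanSpace ℝ (Fin n))), y ≠ x1 := by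
      simp [ae_iff]
    filter_upwards [hx] with x hx
    have h := aux_sum n l hl f hf hf0 x x1
    rw [← hIdef, ← hIdef, hA, ENNReal.mul_top, top_le_iff, ENNReal.add_eq_top] at h
    · exact h.resolve_right hx1
    · have hd : 0 < dist x1 x := dist_pos.2 hx.symm
      have : 0 < (dist x1 x / 2) ^ l := by positivity
      simpa using this
  have hA0 : ∫⁻ y, ENNReal.ofReal (f y) ≠ 0 := by
    intro h
    rw [lintegral_eq_zero_iff (by fun_prop)] at h
    apply hnz
    filter_upwards [h] with y hy
    simp only [Pi.zero_apply, ENNReal.ofReal_eq_zero] at hy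
    exact le_antisymm hy (hf0 y)
  obtain ⟨A, hAdef⟩ : ∃ A, A = (∫⁻ y, ENNReal.ofReal (f y)).toReal := ⟨_, rfl⟩
  have hApos : 0 < A := hAdef ▸ ENNReal.toReal_pos hA0 hA
  have hAe : ∫⁻ y, ENNReal.ofReal (f y) = ENNReal.ofReal A := by rw [hAdef, ENNReal.ofReal_toReal hA]
  have HH : ∀ x, I x ≠ ⊤ → F ^ (1 / p) ≤ K1 * (A * ((I x).toReal / A) ^ β) := fun x hx =>
    H1 _ A (ENNReal.toReal_pos (hIne x) hx) hApos x f hf hf0 hAe (by rw [ENNReal.ofReal_toReal hx, ← hIdef])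
  set δ : ℝ := A * (F ^ (1 / p) / (K1 * A)) ^ (1 / β) with hδ
  have hδ0 : 0 < δ := by positivity
  have hδI : ∀ x, ENNReal.ofReal δ ≤ I x := by
    intro x
    by_cases hx : I x = ⊤
    · simp [hx]
    rw [ENNReal.ofReal_le_iff_le_toReal hx]
    have hm := ENNReal.toReal_pos (hIne x) hx
    have h1 : F ^ (1 / p) / (K1 * A) ≤ ((I x).toReal / A) ^ β := by
      rw [div_le_iff₀ (by positivity)]; linarith [HH x hx]
    have h2 := Real.rpow_le_rpow (by positivity) h1 (by positivity : 0 ≤ 1 / β)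
    rw [← Real.rpow_mul (by positivity), mul_one_div_cancel hβ0.ne', Real.rpow_one, le_div_iff₀ hApos] at h2
    linarith
  have hinf0 : ⨅ x, I x ≠ 0 := by
    have : ENNReal.ofReal δ ≤ ⨅ x, I x := le_iInf hδI
    exact ((ENNReal.ofReal_pos.2 hδ0).trans_le this).ne'
  have hinft : ⨅ x, I x ≠ ⊤ := ne_top_of_le_ne_top hx1 (iInf_le _ x1)
  obtain ⟨x0, hx0⟩ : ∃ x0, I x0 < 2 * ⨅ x, I x := by
    rw [← iInf_lt_iff]
    nth_rewrite 1 [← one_mul (⨅ x, I x)]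
    exact ENNReal.mul_lt_mul_left hinf0 hinft (by norm_num)
  have hx0t : I x0 ≠ ⊤ := hx0.ne_top
  obtain ⟨m, hmdef⟩ : ∃ m, m = (I x0).toReal := ⟨_, rfl⟩
  have hm : 0 < m := hmdef ▸ ENNReal.toReal_pos (hIne x0) hx0t
  have hF1 := HH x0 hx0t
  rw [← hmdef] at hF1
  have hlow : ∀ x, ENNReal.ofReal (c * (m + A * dist x0 x ^ l)) ≤ I x := by
    intro x
    by_cases hx : I x = ⊤
    · simp [hx]
    rw [ENNReal.ofReal_le_iff_le_toReal hx]
    have h1 : m ≤ 2 * (I x).toReal := by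
      have : I x0 ≤ 2 * I x := hx0.le.trans (by gcongr; exact iInf_le _ x)
      have := ENNReal.toReal_mono (ENNReal.mul_ne_top (by norm_num) hx) this
      rw [ENNReal.toReal_mul] at this
      rw [hmdef]; simpa using this
    have h2 := aux_sum n l hl f hf hf0 x x0
    rw [← hIdef, ← hIdef, hAe, ← ENNReal.ofReal_mul (by positivity),
      ENNReal.ofReal_le_iff_le_toReal (ENNReal.add_ne_top.2 ⟨hx, hx0t⟩), ENNReal.toReal_add hx hx0t, ← hmdef,
      div_eq_mul_one_div, Real.mul_rpow (by positivity) (by positivity)] at h2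
    have h3 : ((1:ℝ) / 2) ^ l ≤ 1 := Real.rpow_le_one (by positivity) (by norm_num) hl.le
    have h4 : ((1:ℝ) / 2) ^ l * m ≤ m := mul_le_of_le_one_left hm.le h3
    rw [hc]
    linarith
  have hL : ∫⁻ x, I x ^ q ≤ ENNReal.ofReal (c ^ q * (K2 * m ^ q * (m / A) ^ (n / l))) := by
    rw [ENNReal.ofReal_mul (by positivity)]
    refine le_trans ?_ (mul_le_mul_right (H2 m A hm hApos x0) _)
    rw [← lintegral_const_mul _ (by fun_prop)]
    apply lintegral_mono
    intro x
    have hw : 0 < m + A * dist x0 x ^ l := by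
      have := Real.rpow_nonneg (dist_nonneg (x := x0) (y := x)) l
      positivity
    simp only
    rw [← ENNReal.ofReal_mul (by positivity), ← Real.mul_rpow hc0.le hw.le,
      ← ENNReal.ofReal_rpow_of_pos (by positivity)]
    exact aux_rpow hq0.le (hlow x)
  refine le_trans ?_ (aux_rpow hqinv.le hL)
  rw [ENNReal.ofReal_rpow_of_pos (by positivity)]
  apply ENNReal.ofReal_le_ofReal
  have e : (c ^ q * (K2 * m ^ q * (m / A) ^ (n / l))) ^ (1 / q) = c * K2 ^ (1 / q) * (A * (m / A) ^ β) := by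
    set r := m / A with hr
    have hr0 : 0 < r := by positivity
    have hmr : m = A * r := by rw [hr]; field_simp
    have i1 : q * (1 / q) = 1 := mul_one_div_cancel hq0.ne
    have i2 : (n:ℝ) / l * (1 / q) = β - 1 := by rw [hq', hβ]; field_simp
    rw [Real.mul_rpow (by positivity) (by positivity), Real.mul_rpow (by positivity) (by positivity),
      Real.mul_rpow (by positivity) (by positivity), ← Real.rpow_mul hc0.le, ← Real.rpow_mul hm.le,
      ← Real.rpow_mul hr0.le, i1, i2, Real.rpow_one, Real.rpow_one, Real.rpow_sub_one hr0.ne']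
    nth_rewrite 1 [hmr]
    field_simp
  rw [e]
  calc c * K2 ^ (1 / q) / K1 * F ^ (1 / p) ≤ c * K2 ^ (1 / q) / K1 * (K1 * (A * (m / A) ^ β)) := by gcongr
    _ = _ := by field_simp
end

section
/- Let 1 ≤ n < α, p = 2n/(n+α), q = 2n/(n−α). Then for every nonnegative F ∈ L^p(𝕊ⁿ), one has ‖Ĩ_α F‖_{L^q(𝕊ⁿ)} ≥ N*(n, α)·‖F‖_{L^p(𝕊ⁿ)}, where N*(n, α) = π^{(n−α)/2} · Γ(α/2)/Γ((n+α)/2) · (Γ(n/2)/Γ(n))^{−α/n}. -/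
open MeasureTheory ENNReal Metric

/-- The standard surface measure on the unit sphere `𝕊ⁿ ⊆ ℝ^(n+1)`. -/
noncomputable def sphereMeasure (n : ℕ) :
    Measure (sphere (0 : EuclideanSpace ℝ (Fin (n + 1))) 1) :=
  (volume : Measure (EuclideanSpace ℝ (Fin (n + 1)))).toSphere

/-- The singular integral operator `Ĩ_α F(ξ) = ∫_{𝕊ⁿ} F(η) |ξ-η|^(α-n) dη` on the sphere,
where `|ξ-η|` is the chordal distance in `ℝ^(n+1)`, valued in `ℝ≥0∞`. -/
noncomputable def sphereRiesz (n : ℕ) (α : ℝ)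
    (F : sphere (0 : EuclideanSpace ℝ (Fin (n + 1))) 1 → ℝ)
    (ξ : sphere (0 : EuclideanSpace ℝ (Fin (n + 1))) 1) : ℝ≥0∞ :=
  ∫⁻ η, ENNReal.ofReal (F η *
    dist (ξ : EuclideanSpace ℝ (Fin (n + 1))) (η : EuclideanSpace ℝ (Fin (n + 1))) ^ (α - n))
    ∂(sphereMeasure n)

set_option linter.unusedSectionVars false

namespace RHLS
section Abstract

variable {X : Type*} [MetricSpace X] [CompactSpace X] [MeasurableSpace X] [BorelSpace X]
  {μ : Measure X} [IsFiniteMeasure μ]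

/-- Admissible functions: measurable and pinched between two positive constants. -/
def Adm (F : X → ℝ) : Prop := Measurable F ∧ ∃ a b : ℝ, 0 < a ∧ ∀ x, a ≤ F x ∧ F x ≤ b

/-- Potential of `F` for the kernel `K`. -/
noncomputable def pot (μ : Measure X) (K : X → X → ℝ) (F : X → ℝ) (x : X) : ℝ :=
  ∫ y, K x y * F y ∂μ

theorem Adm.pos {F : X → ℝ} (h : Adm F) (x : X) : 0 < F x := by
  obtain ⟨_, a, b, ha, hab⟩ := h
  exact ha.trans_le (hab x).1

theorem Adm.integrable {F : X → ℝ} (h : Adm F) : Integrable F μ := by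
  obtain ⟨hm, a, b, ha, hab⟩ := h
  refine Integrable.of_bound hm.aestronglyMeasurable b (ae_of_all _ fun x => ?_)
  rw [Real.norm_of_nonneg (ha.le.trans (hab x).1)]
  exact (hab x).2

theorem Adm.rpow {F : X → ℝ} (h : Adm F) (r : ℝ) : Adm (fun x => F x ^ r) := by
  obtain ⟨hm, a, b, ha, hab⟩ := h
  refine ⟨hm.pow_const r, ?_⟩
  rcases le_total 0 r with hr | hr
  · exact ⟨a ^ r, b ^ r, Real.rpow_pos_of_pos ha _, fun x =>
      ⟨Real.rpow_le_rpow ha.le (hab x).1 hr,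
        Real.rpow_le_rpow (ha.le.trans (hab x).1) (hab x).2 hr⟩⟩
  · by_cases hX : Nonempty X
    · obtain ⟨x0⟩ := hX
      have hb : 0 < b := ha.trans_le ((hab x0).1.trans (hab x0).2)
      exact ⟨b ^ r, a ^ r, Real.rpow_pos_of_pos hb _, fun x =>
        ⟨Real.rpow_le_rpow_of_nonpos (ha.trans_le (hab x).1) (hab x).2 hr,
          Real.rpow_le_rpow_of_nonpos ha (hab x).1 hr⟩⟩
    · exact ⟨1, 1, one_pos, fun x => (hX ⟨x⟩).elim⟩

theorem Adm.mul {F G : X → ℝ} (h : Adm F) (h' : Adm G) : Adm (fun x => F x * G x) := by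
  obtain ⟨hm, a, b, ha, hab⟩ := h
  obtain ⟨hm', a', b', ha', hab'⟩ := h'
  refine ⟨hm.mul hm', a * a', b * b', by positivity, fun x => ⟨?_, ?_⟩⟩
  · exact mul_le_mul (hab x).1 (hab' x).1 ha'.le (ha.le.trans (hab x).1)
  · exact mul_le_mul (hab x).2 (hab' x).2 (ha'.le.trans (hab' x).1)
      ((ha.le.trans (hab x).1).trans (hab x).2)

theorem Adm.const {c : ℝ} (hc : 0 < c) : Adm (fun _ : X => c) :=
  ⟨measurable_const, c, c, hc, fun _ => ⟨le_rfl, le_rfl⟩⟩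

theorem Adm.integral_pos {F : X → ℝ} (h : Adm F) (hμ : μ ≠ 0) : 0 < ∫ x, F x ∂μ := by
  rw [integral_pos_iff_support_of_nonneg (fun x => (h.pos x).le) h.integrable]
  have : Function.support F = Set.univ := by
    ext x; simp [(h.pos x).ne']
  rw [this]
  exact pos_iff_ne_zero.2 (by simpa using hμ)

theorem adm_of_continuous {F : X → ℝ} (hc : Continuous F) (hpos : ∀ x, 0 < F x) : Adm F := by
  refine ⟨hc.measurable, ?_⟩
  by_cases hX : Nonempty X
  · obtain ⟨x1, -, h1⟩ := isCompact_univ.exists_isMinOn Set.univ_nonempty hc.continuousOn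
    obtain ⟨x2, -, h2⟩ := isCompact_univ.exists_isMaxOn Set.univ_nonempty hc.continuousOn
    exact ⟨F x1, F x2, hpos x1, fun x => ⟨h1 (Set.mem_univ x), h2 (Set.mem_univ x)⟩⟩
  · exact ⟨1, 1, one_pos, fun x => (hX ⟨x⟩).elim⟩

/-- reverse Hölder -/
theorem rev_holder {p q : ℝ} (hp0 : 0 < p) (hp1 : p < 1) (hq : q = p / (p - 1)) (hμ : μ ≠ 0)
    {f g : X → ℝ} (hf : Adm f) (hg : Adm g) :
    (∫ x, f x ^ p ∂μ) ^ (1 / p) * (∫ x, g x ^ q ∂μ) ^ (1 / q) ≤ ∫ x, f x * g x ∂μ := by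
  have h1p : 0 < 1 - p := by linarith
  have hconj : (1 / p).HolderConjugate (1 / (1 - p)) := by
    rw [Real.holderConjugate_iff]
    constructor
    · rw [lt_div_iff₀ hp0]; linarith
    · simp
  have hfg := hf.mul hg
  have A1 : Adm (fun x => (f x * g x) ^ p) := hfg.rpow p
  have A2 : Adm (fun x => g x ^ (-p)) := hg.rpow _
  have key := integral_mul_le_Lp_mul_Lq_of_nonneg (μ := μ) hconj
    (f := fun x => (f x * g x) ^ p) (g := fun x => g x ^ (-p))
    (ae_of_all _ fun x => (A1.pos x).le) (ae_of_all _ fun x => (A2.pos x).le)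
    (by
      obtain ⟨hm, a, b, ha, hab⟩ := A1
      refine MemLp.of_bound hm.aestronglyMeasurable b (ae_of_all _ fun x => ?_)
      rw [Real.norm_of_nonneg (ha.le.trans (hab x).1)]
      exact (hab x).2)
    (by
      obtain ⟨hm, a, b, ha, hab⟩ := A2
      refine MemLp.of_bound hm.aestronglyMeasurable b (ae_of_all _ fun x => ?_)
      rw [Real.norm_of_nonneg (ha.le.trans (hab x).1)]
      exact (hab x).2)
  have e1 : ∀ x, (f x * g x) ^ p * g x ^ (-p) = f x ^ p := fun x => by
    rw [Real.mul_rpow (hf.pos x).le (hg.pos x).le, mul_assoc, ← Real.rpow_add (hg.pos x)]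
    simp
  have e2 : ∀ x, ((f x * g x) ^ p) ^ (1 / p) = f x * g x := fun x => by
    rw [← Real.rpow_mul (hfg.pos x).le]; field_simp; simp
  have e3 : ∀ x, (g x ^ (-p)) ^ (1 / (1 - p)) = g x ^ q := fun x => by
    rw [← Real.rpow_mul (hg.pos x).le, hq]; congr 1
    rw [← neg_sub 1 p, div_neg]; ring
  simp only [e1, e2, e3] at key
  have P1 : 0 < ∫ x, f x * g x ∂μ := hfg.integral_pos hμ
  have P2 : 0 < ∫ x, g x ^ q ∂μ := (hg.rpow q).integral_pos hμ
  have P3 : 0 < ∫ x, f x ^ p ∂μ := (hf.rpow p).integral_pos hμ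
  have k2 := Real.rpow_le_rpow P3.le key (z := 1 / p) (by positivity)
  rw [Real.mul_rpow (by positivity) (by positivity), ← Real.rpow_mul P1.le,
    ← Real.rpow_mul P2.le] at k2
  have : (1 / (1 / p) * (1 / p) : ℝ) = 1 := by field_simp
  rw [this, Real.rpow_one] at k2
  have h4 : (1 / (1 / (1 - p)) * (1 / p) : ℝ) = - (1 / q) := by
    rw [hq]; have : p - 1 ≠ 0 := by linarith
    field_simp; ring
  rw [h4] at k2
  calc _ ≤ ((∫ x, f x * g x ∂μ) * (∫ x, g x ^ q ∂μ) ^ (-(1 / q))) * (∫ x, g x ^ q ∂μ) ^ (1 / q) := by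
        gcongr
    _ = _ := by
        rw [mul_assoc, ← Real.rpow_add P2]; simp

section kernel
variable {K : X → X → ℝ} (hK : Continuous (Function.uncurry K))
include hK

theorem kernel_mul_integrable {F : X → ℝ} (hF : Adm F) (x : X) :
    Integrable (fun y => K x y * F y) μ := by
  have hc : Continuous (K x) := hK.comp (by fun_prop : Continuous fun y => (x, y))
  exact hF.integrable.bdd_mul hc.aestronglyMeasurable (c := ‖(⟨K x, hc⟩ : C(X, ℝ))‖)
    (ae_of_all _ fun y => (⟨K x, hc⟩ : C(X, ℝ)).norm_coe_le_norm y)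

theorem pot_sub_le {F : X → ℝ} (hF : Adm F) (x x' : X) :
    |pot μ K F x - pot μ K F x'| ≤
      dist ((⟨_, hK⟩ : C(X × X, ℝ)).curry x) ((⟨_, hK⟩ : C(X × X, ℝ)).curry x') * ∫ y, F y ∂μ := by
  unfold pot
  rw [← integral_sub (kernel_mul_integrable hK hF x) (kernel_mul_integrable hK hF x'),
    ← integral_const_mul]
  rw [← Real.norm_eq_abs]
  refine norm_integral_le_of_norm_le (hF.integrable.const_mul _) (ae_of_all _ fun y => ?_)
  rw [← sub_mul, norm_mul, Real.norm_of_nonneg (hF.pos y).le]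
  refine mul_le_mul_of_nonneg_right ?_ (hF.pos y).le
  exact ContinuousMap.dist_apply_le_dist (f := (⟨_, hK⟩ : C(X × X, ℝ)).curry x)
    (g := (⟨_, hK⟩ : C(X × X, ℝ)).curry x') y

theorem pot_continuous {F : X → ℝ} (hF : Adm F) : Continuous (pot μ K F) := by
  rw [continuous_iff_continuousAt]
  intro x
  rw [ContinuousAt, tendsto_iff_dist_tendsto_zero]
  refine squeeze_zero (fun _ => dist_nonneg) (fun x' => ?_)
    (g := fun x' => dist ((⟨_, hK⟩ : C(X × X, ℝ)).curry x') ((⟨_, hK⟩ : C(X × X, ℝ)).curry x)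
      * ∫ y, F y ∂μ) ?_
  · rw [Real.dist_eq]; exact pot_sub_le hK hF x' x
  · have : Continuous (fun x' => dist ((⟨_, hK⟩ : C(X × X, ℝ)).curry x')
      ((⟨_, hK⟩ : C(X × X, ℝ)).curry x) * ∫ y, F y ∂μ) :=
      ((map_continuous _).dist continuous_const).mul continuous_const
    have h := this.tendsto x
    simpa using h

theorem pot_lower {ε : ℝ} (hKε : ∀ x y, ε ≤ K x y) {F : X → ℝ} (hF : Adm F) (x : X) :
    ε * ∫ y, F y ∂μ ≤ pot μ K F x := by
  unfold pot
  rw [← integral_const_mul]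
  exact integral_mono (hF.integrable.const_mul _) (kernel_mul_integrable hK hF x)
    fun y => mul_le_mul_of_nonneg_right (hKε x y) (hF.pos y).le

theorem pot_upper {C : ℝ} (hKC : ∀ x y, K x y ≤ C) {F : X → ℝ} (hF : Adm F) (x : X) :
    pot μ K F x ≤ C * ∫ y, F y ∂μ := by
  unfold pot
  rw [← integral_const_mul]
  exact integral_mono (kernel_mul_integrable hK hF x) (hF.integrable.const_mul _)
    fun y => mul_le_mul_of_nonneg_right (hKC x y) (hF.pos y).le

theorem pot_adm {ε : ℝ} (hε : 0 < ε) (hKε : ∀ x y, ε ≤ K x y) (hμ : μ ≠ 0)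
    {F : X → ℝ} (hF : Adm F) : Adm (pot μ K F) :=
  adm_of_continuous (pot_continuous hK hF) fun x =>
    (mul_pos hε (hF.integral_pos hμ)).trans_le (pot_lower hK hKε hF x)

theorem kernel_prod_integrable {F G : X → ℝ} (hF : Adm F) (hG : Adm G) :
    Integrable (fun z : X × X => F z.1 * G z.2 * K z.1 z.2) (μ.prod μ) := by
  have h : Integrable (fun z : X × X => F z.1 * G z.2) (μ.prod μ) :=
    hF.integrable.mul_prod hG.integrable
  have := h.bdd_mul hK.aestronglyMeasurable (c := ‖(⟨_, hK⟩ : C(X × X, ℝ))‖)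
    (ae_of_all _ fun y => (⟨_, hK⟩ : C(X × X, ℝ)).norm_coe_le_norm y)
  refine this.congr (ae_of_all _ fun z => ?_)
  simp only [Function.uncurry]; ring

theorem form_eq_prod {F G : X → ℝ} (hF : Adm F) (hG : Adm G) :
    ∫ x, F x * pot μ K G x ∂μ = ∫ z : X × X, F z.1 * G z.2 * K z.1 z.2 ∂(μ.prod μ) := by
  rw [integral_prod _ (kernel_prod_integrable hK hF hG)]
  refine integral_congr_ae (ae_of_all _ fun x => ?_)
  simp only [pot]
  rw [← integral_const_mul]
  refine integral_congr_ae (ae_of_all _ fun y => ?_)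
  simp only; ring

theorem form_symm (hsymm : ∀ x y, K x y = K y x) {F G : X → ℝ} (hF : Adm F) (hG : Adm G) :
    ∫ x, F x * pot μ K G x ∂μ = ∫ x, G x * pot μ K F x ∂μ := by
  rw [form_eq_prod hK hF hG, form_eq_prod hK hG hF, ← integral_prod_swap]
  refine integral_congr_ae (ae_of_all _ fun z => ?_)
  simp only [Prod.fst_swap, Prod.snd_swap, hsymm z.2 z.1]; ring

end kernel

/-- `L^r` expression of a positive function. -/
noncomputable def nm (μ : Measure X) (r : ℝ) (F : X → ℝ) : ℝ := (∫ x, F x ^ r ∂μ) ^ (1 / r)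

theorem nm_pos (hμ : μ ≠ 0) {F : X → ℝ} (hF : Adm F) (r : ℝ) : 0 < nm μ r F :=
  Real.rpow_pos_of_pos ((hF.rpow r).integral_pos hμ) _

theorem nm_smul {F : X → ℝ} (hF : Adm F) {r c : ℝ} (hr : r ≠ 0) (hc : 0 < c) :
    nm μ r (fun x => c * F x) = c * nm μ r F := by
  unfold nm
  have : ∀ x, (c * F x) ^ r = c ^ r * F x ^ r := fun x => Real.mul_rpow hc.le (hF.pos x).le
  simp only [this]
  rw [integral_const_mul, Real.mul_rpow (by positivity)
    (integral_nonneg fun x => ((hF.rpow r).pos x).le), ← Real.rpow_mul hc.le]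
  rw [mul_one_div_cancel hr, Real.rpow_one]

/-- equality in the reverse Hölder inequality -/
theorem holder_eq {p q : ℝ} (hp0 : 0 < p) (hp1 : p < 1) (hq : q = p / (p - 1)) (hμ : μ ≠ 0)
    {g : X → ℝ} (hg : Adm g) :
    ∫ x, g x ^ (1 / (p - 1)) * g x ∂μ =
      nm μ p (fun x => g x ^ (1 / (p - 1))) * nm μ q g := by
  have hne : p - 1 ≠ 0 := by linarith
  have e1 : ∀ x, g x ^ (1 / (p - 1)) * g x = g x ^ q := fun x => by
    nth_rw 2 [← Real.rpow_one (g x)]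
    rw [← Real.rpow_add (hg.pos x), hq]; congr 1; field_simp; ring
  have e2 : ∀ x, (g x ^ (1 / (p - 1))) ^ p = g x ^ q := fun x => by
    rw [← Real.rpow_mul (hg.pos x).le, hq]; congr 1; field_simp
  unfold nm
  simp only [e1, e2]
  have P2 : 0 < ∫ x, g x ^ q ∂μ := (hg.rpow q).integral_pos hμ
  rw [← Real.rpow_add P2]
  have : 1 / p + 1 / q = 1 := by rw [hq]; field_simp; ring
  rw [this, Real.rpow_one]

end Abstract
end RHLS

namespace RHLS
section Exist

variable {X : Type*} [MetricSpace X] [CompactSpace X] [MeasurableSpace X] [BorelSpace X]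
  {μ : Measure X} [IsFiniteMeasure μ]

/-- quotient functional -/
noncomputable def quo (μ : Measure X) (K : X → X → ℝ) (p q : ℝ) (F : X → ℝ) : ℝ :=
  nm μ q (pot μ K F) / nm μ p F

theorem pot_smul (K : X → X → ℝ) (F : X → ℝ) (c : ℝ) (x : X) :
    pot μ K (fun y => c * F y) x = c * pot μ K F x := by
  unfold pot
  rw [← integral_const_mul]
  exact integral_congr_ae (ae_of_all _ fun y => by simp only; ring)

theorem quo_smul {K : X → X → ℝ} (hK : Continuous (Function.uncurry K))
    {ε : ℝ} (hε : 0 < ε) (hKε : ∀ x y, ε ≤ K x y) (hμ : μ ≠ 0) {p q : ℝ} (hp : p ≠ 0) (hq : q ≠ 0)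
    {F : X → ℝ} (hF : Adm F) {c : ℝ} (hc : 0 < c) :
    quo μ K p q (fun x => c * F x) = quo μ K p q F := by
  unfold quo
  have : pot μ K (fun y => c * F y) = fun x => c * pot μ K F x := funext fun x => pot_smul K F c x
  rw [this, nm_smul (pot_adm hK hε hKε hμ hF) hq hc, nm_smul hF hp hc,
    mul_div_mul_left _ _ hc.ne']

noncomputable def opt (μ : Measure X) (K : X → X → ℝ) (p : ℝ) (F : X → ℝ) (x : X) : ℝ :=
  pot μ K F x ^ (1 / (p - 1))

section
variable {K : X → X → ℝ} (hK : Continuous (Function.uncurry K)) (hsymm : ∀ x y, K x y = K y x)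
    {ε : ℝ} (hε : 0 < ε) (hKε : ∀ x y, ε ≤ K x y) (hμ : μ ≠ 0) {p q : ℝ} (hp0 : 0 < p)
    (hp1 : p < 1) (hq : q = p / (p - 1))

include hK hε hKε hμ

theorem opt_adm {F : X → ℝ} (hF : Adm F) : Adm (opt μ K p F) :=
  (pot_adm hK hε hKε hμ hF).rpow _

theorem opt_continuous {F : X → ℝ} (hF : Adm F) : Continuous (opt μ K p F) :=
  (pot_continuous hK hF).rpow_const fun x => Or.inl ((pot_adm hK hε hKε hμ hF).pos x).ne'

include hp0 hp1 hq

theorem opt_form {F : X → ℝ} (hF : Adm F) :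
    ∫ x, opt μ K p F x * pot μ K F x ∂μ = quo μ K p q F * nm μ p F * nm μ p (opt μ K p F) := by
  have h := holder_eq (μ := μ) hp0 hp1 hq hμ (pot_adm hK hε hKε hμ hF)
  have h2 := nm_pos hμ hF p
  unfold quo
  rw [div_mul_cancel₀ _ h2.ne', mul_comm (nm μ q _)]
  exact h

theorem form_ge {F G : X → ℝ} (hF : Adm F) (hG : Adm G) :
    quo μ K p q F * nm μ p F * nm μ p G ≤ ∫ x, G x * pot μ K F x ∂μ := by
  have h2 := nm_pos hμ hF p
  unfold quo
  rw [div_mul_cancel₀ _ h2.ne', mul_comm (nm μ q _)]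
  exact rev_holder hp0 hp1 hq hμ hG (pot_adm hK hε hKε hμ hF)

include hsymm in
theorem quo_opt_le {F : X → ℝ} (hF : Adm F) : quo μ K p q (opt μ K p F) ≤ quo μ K p q F := by
  have hT : Adm (opt μ K p F) := opt_adm hK hε hKε hμ hF
  have h1 := form_ge hK hε hKε hμ hp0 hp1 hq hT hF
  rw [form_symm hK hsymm hF hT, opt_form hK hε hKε hμ hp0 hp1 hq hF] at h1
  have a1 := nm_pos hμ hF p
  have a2 := nm_pos hμ hT p
  have a3 : 0 < nm μ p F * nm μ p (opt μ K p F) := mul_pos a1 a2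
  nlinarith

omit hK hε hKε hμ hp0 hp1 hq in
theorem continuous_integral_joint {Y : Type*} [TopologicalSpace Y] {h : Y → X → ℝ}
    (hh : Continuous (Function.uncurry h)) : Continuous fun y => ∫ x, h y x ∂μ := by
  let c : C(Y, C(X, ℝ)) := (⟨_, hh⟩ : C(Y × X, ℝ)).curry
  have h1 : Continuous fun f : C(X, ℝ) => ∫ x, f x ∂μ := by
    refine (LipschitzWith.of_dist_le_mul (K := (μ.real Set.univ).toNNReal) fun f g => ?_).continuous
    rw [Real.dist_eq, ← integral_sub (f.continuous.integrable_of_hasCompactSupport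
      (HasCompactSupport.of_compactSpace _)) (g.continuous.integrable_of_hasCompactSupport
      (HasCompactSupport.of_compactSpace _)), Real.coe_toNNReal _ measureReal_nonneg, mul_comm]
    have hb : ∀ x, ‖f x - g x‖ ≤ dist f g := fun x => by
      rw [← dist_eq_norm]; exact ContinuousMap.dist_apply_le_dist x
    exact norm_integral_le_of_norm_le_const (μ := μ) (ae_of_all _ hb)
  exact h1.comp (map_continuous c)

/-- the reparametrized functional is continuous -/
theorem quo_param_continuous :
    Continuous fun W : BoundedContinuousFunction X ℝ =>
      quo μ K p q (fun x => max (W x) ε ^ (1 / (p - 1))) := by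
  have hφ : ∀ t : ℝ, 0 < max t ε := fun t => lt_max_of_lt_right hε
  have hev : Continuous fun z : BoundedContinuousFunction X ℝ × X => z.1 z.2 :=
    continuous_eval
  have hadm : ∀ W : BoundedContinuousFunction X ℝ, Adm (fun x => max (W x) ε ^ (1 / (p - 1))) :=
    fun W => adm_of_continuous
      ((W.continuous.max continuous_const).rpow_const fun x => Or.inl (hφ _).ne')
      fun x => Real.rpow_pos_of_pos (hφ _) _
  have hφc : Continuous fun z : BoundedContinuousFunction X ℝ × X =>
      max (z.1 z.2) ε ^ (1 / (p - 1)) :=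
    (hev.max continuous_const).rpow_const fun z => Or.inl (hφ _).ne'
  have hpot : Continuous fun z : BoundedContinuousFunction X ℝ × X =>
      pot μ K (fun x => max (z.1 x) ε ^ (1 / (p - 1))) z.2 := by
    unfold pot
    refine continuous_integral_joint (μ := μ)
      (h := fun (z : BoundedContinuousFunction X ℝ × X) y =>
        K z.2 y * max (z.1 y) ε ^ (1 / (p - 1))) ?_
    refine Continuous.mul (hK.comp (by fun_prop :
      Continuous fun z : (BoundedContinuousFunction X ℝ × X) × X => (z.1.2, z.2))) ?_
    exact hφc.comp (by fun_prop :
      Continuous fun z : (BoundedContinuousFunction X ℝ × X) × X => (z.1.1, z.2))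
  have hden : Continuous fun W : BoundedContinuousFunction X ℝ =>
      ∫ x, (max (W x) ε ^ (1 / (p - 1))) ^ p ∂μ := 
    continuous_integral_joint (μ := μ)
      (h := fun (W : BoundedContinuousFunction X ℝ) x => (max (W x) ε ^ (1 / (p - 1))) ^ p)
      (hφc.rpow_const fun z => Or.inl ((hadm z.1).pos z.2).ne')
  have hnum : Continuous fun W : BoundedContinuousFunction X ℝ =>
      ∫ x, (pot μ K (fun x => max (W x) ε ^ (1 / (p - 1))) x) ^ q ∂μ :=
    continuous_integral_joint (μ := μ)
      (h := fun (W : BoundedContinuousFunction X ℝ) x =>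
        (pot μ K (fun x => max (W x) ε ^ (1 / (p - 1))) x) ^ q)
      (hpot.rpow_const fun z => Or.inl ((pot_adm hK hε hKε hμ (hadm z.1)).pos z.2).ne')
  unfold quo nm
  refine Continuous.div ?_ ?_ ?_
  · exact hnum.rpow_const fun W => Or.inl
      (((pot_adm hK hε hKε hμ (hadm W)).rpow q).integral_pos hμ).ne'
  · exact hden.rpow_const fun W => Or.inl (((hadm W).rpow p).integral_pos hμ).ne'
  · intro W
    exact (nm_pos hμ (hadm W) p).ne'

include hsymm in
theorem exists_min [Nonempty X] : ∃ F0 : X → ℝ, Adm F0 ∧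
    ∀ F, Adm F → quo μ K p q F0 ≤ quo μ K p q F := by
  obtain ⟨C, hC⟩ : ∃ C, ∀ x y, K x y ≤ C :=
    ⟨_, fun x y => (le_abs_self _).trans ((⟨_, hK⟩ : C(X × X, ℝ)).norm_coe_le_norm (x, y))⟩
  let kk : X → C(X, ℝ) := fun x => (⟨_, hK⟩ : C(X × X, ℝ)).curry x
  have hkk : Continuous kk := map_continuous (⟨_, hK⟩ : C(X × X, ℝ)).curry
  let A : Set (BoundedContinuousFunction X ℝ) :=
    {W | (∀ x, W x ∈ Set.Icc ε C) ∧ ∀ x x', |W x - W x'| ≤ dist (kk x) (kk x')}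
  have hev : ∀ x, Continuous fun W : BoundedContinuousFunction X ℝ => W x := fun x =>
    continuous_eval_const x
  have hclosed : IsClosed A := by
    have h1 : A = (⋂ x, {W : BoundedContinuousFunction X ℝ | W x ∈ Set.Icc ε C}) ∩
        ⋂ x, ⋂ x', {W : BoundedContinuousFunction X ℝ | |W x - W x'| ≤ dist (kk x) (kk x')} := by
      ext W; simp [A]
    rw [h1]
    refine IsClosed.inter (isClosed_iInter fun x => isClosed_Icc.preimage (hev x))
      (isClosed_iInter fun x => isClosed_iInter fun x' => isClosed_le ?_ continuous_const)
    exact ((hev x).sub (hev x')).abs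
  have hcomp : IsCompact A := by
    refine BoundedContinuousFunction.arzela_ascoli₂ (Set.Icc ε C) isCompact_Icc A hclosed
      (fun f x hf => hf.1 x) ?_
    intro x
    rw [Metric.equicontinuousAt_iff]
    intro δ hδ
    obtain ⟨η, hη, h⟩ := Metric.continuousAt_iff.1 (hkk.continuousAt (x := x)) δ hδ
    refine ⟨η, hη, fun y hy W => ?_⟩
    have := W.2.2 x y
    rw [Real.dist_eq]
    exact this.trans_lt (by rw [dist_comm]; exact h hy)
  have hmem : ∀ F, Adm F → ∃ W ∈ A, quo μ K p q (fun x => max (W x) ε ^ (1 / (p - 1))) =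
      quo μ K p q (opt μ K p F) := by
    intro F hF
    have hI : 0 < ∫ y, F y ∂μ := hF.integral_pos hμ
    have hP := pot_continuous (μ := μ) hK hF
    let W : BoundedContinuousFunction X ℝ := BoundedContinuousFunction.mkOfCompact
      ⟨fun x => pot μ K F x / ∫ y, F y ∂μ, hP.div_const _⟩
    have hW : ∀ x, W x = pot μ K F x / ∫ y, F y ∂μ := fun x => rfl
    have hlow : ∀ x, ε ≤ W x := fun x => by
      rw [hW, le_div_iff₀ hI]; exact pot_lower hK hKε hF x
    refine ⟨W, ⟨fun x => ⟨hlow x, ?_⟩, fun x x' => ?_⟩, ?_⟩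
    · rw [hW, div_le_iff₀ hI]; exact pot_upper hK hC hF x
    · rw [hW, hW, ← sub_div, abs_div, abs_of_pos hI, div_le_iff₀ hI]
      exact pot_sub_le hK hF x x'
    · have hq0 : q ≠ 0 := by
        rw [hq]; exact div_ne_zero hp0.ne' (by linarith)
      rw [← quo_smul hK hε hKε hμ hp0.ne' hq0 (opt_adm hK hε hKε hμ hF)
        (Real.rpow_pos_of_pos (inv_pos.2 hI) (1 / (p - 1)))]
      congr 1
      funext x
      rw [max_eq_left (hlow x), hW, opt, ← Real.mul_rpow (inv_pos.2 hI).le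
        ((pot_adm hK hε hKε hμ hF).pos x).le]
      congr 1
      rw [div_eq_inv_mul]
  have hne : A.Nonempty := by
    obtain ⟨W, hW, -⟩ := hmem (fun _ => 1) (Adm.const one_pos)
    exact ⟨W, hW⟩
  obtain ⟨W0, hW0, hmin⟩ := hcomp.exists_isMinOn hne
    (quo_param_continuous hK hε hKε hμ hp0 hp1 hq).continuousOn
  have hφ : ∀ t : ℝ, 0 < max t ε := fun t => lt_max_of_lt_right hε
  refine ⟨fun x => max (W0 x) ε ^ (1 / (p - 1)), adm_of_continuous
      ((W0.continuous.max continuous_const).rpow_const fun x => Or.inl (hφ _).ne')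
      fun x => Real.rpow_pos_of_pos (hφ _) _, fun F hF => ?_⟩
  obtain ⟨W, hW, hWe⟩ := hmem F hF
  have h1 := hmin hW
  simp only [Set.mem_ofPred_eq] at h1
  rw [hWe] at h1
  refine le_trans h1 ?_
  exact quo_opt_le hK hsymm hε hKε hμ hp0 hp1 hq hF

include hsymm in
/-- existence of a continuous minimizing pair, with Euler–Lagrange relation for the first entry -/
theorem exists_min_pair [Nonempty X] : ∃ (m : ℝ) (F G : X → ℝ), Continuous F ∧ Continuous G ∧
    Adm F ∧ Adm G ∧
    (∀ F' G', Adm F' → Adm G' → m * nm μ p F' * nm μ p G' ≤ ∫ x, F' x * pot μ K G' x ∂μ) ∧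
    ∫ x, F x * pot μ K G x ∂μ = m * nm μ p F * nm μ p G ∧ F = opt μ K p G := by
  obtain ⟨F0, hF0, hmin⟩ := exists_min hK hsymm hε hKε hμ hp0 hp1 hq
  have hG : Adm (opt μ K p F0) := opt_adm hK hε hKε hμ hF0
  have hF : Adm (opt μ K p (opt μ K p F0)) := opt_adm hK hε hKε hμ hG
  have hm : ∀ F' G', Adm F' → Adm G' → quo μ K p q F0 * nm μ p F' * nm μ p G'
      ≤ ∫ x, F' x * pot μ K G' x ∂μ := by
    intro F' G' hF' hG'
    rw [form_symm hK hsymm hF' hG']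
    refine le_trans ?_ (form_ge hK hε hKε hμ hp0 hp1 hq hF' hG')
    have := nm_pos hμ hF' p
    have := nm_pos hμ hG' p
    have := hmin F' hF'
    gcongr
  refine ⟨quo μ K p q F0, opt μ K p (opt μ K p F0), opt μ K p F0,
    opt_continuous hK hε hKε hμ hG, opt_continuous hK hε hKε hμ hF0, hF, hG, hm,
    le_antisymm ?_ (hm _ _ hF hG), rfl⟩
  rw [opt_form hK hε hKε hμ hp0 hp1 hq hG]
  have h1 := quo_opt_le hK hsymm hε hKε hμ hp0 hp1 hq hF0
  have a1 := nm_pos hμ hF p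
  have a2 := nm_pos hμ hG p
  rw [mul_assoc, mul_assoc, mul_comm (nm μ p (opt μ K p F0))]
  exact mul_le_mul_of_nonneg_right h1 (mul_pos a1 a2).le

end
end Exist
end RHLS

namespace RHLS
section Geom

variable {E : Type*} [NormedAddCommGroup E] [InnerProductSpace ℝ E] [FiniteDimensional ℝ E]
  [MeasurableSpace E] [BorelSpace E] 

/-- Generalized polar coordinates for `lintegral`. -/
theorem lintegral_polar [Nontrivial E] {g : E → ℝ≥0∞} (hg : Measurable g) :
    ∫⁻ x, g x = ∫⁻ ξ : sphere (0 : E) 1, ∫⁻ r : Set.Ioi (0 : ℝ), g (r.1 • ξ.1)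
      ∂(Measure.volumeIoiPow (Module.finrank ℝ E - 1)) ∂((volume : Measure E).toSphere) := by
  have h0 := (volume : Measure E).measurePreserving_homeomorphUnitSphereProd
  have hm : Measurable fun z : sphere (0 : E) 1 × Set.Ioi (0 : ℝ) => g (z.2.1 • z.1.1) :=
    hg.comp (by fun_prop)
  have h1 := h0.lintegral_comp hm
  rw [lintegral_prod _ hm.aemeasurable] at h1
  have h2 := lintegral_subtype_comap (μ := (volume : Measure E))
    (measurableSet_singleton (0 : E)).compl g
  rw [restrict_compl_singleton] at h2
  rw [← h1, ← h2]
  refine lintegral_congr fun x => ?_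
  have hx : ‖(x : E)‖ ≠ 0 := norm_ne_zero_iff.2 x.2
  simp [smul_smul, hx]

theorem lintegral_volumeIoiPow (n : ℕ) {h : ℝ → ℝ≥0∞} (hh : Measurable h) :
    ∫⁻ r : Set.Ioi (0 : ℝ), h r.1 ∂(Measure.volumeIoiPow n) =
      ∫⁻ r in Set.Ioi (0 : ℝ), ENNReal.ofReal (r ^ n) * h r := by
  rw [Measure.volumeIoiPow, lintegral_withDensity_eq_lintegral_mul _ (by fun_prop)
    (by fun_prop : Measurable fun r : Set.Ioi (0 : ℝ) => h r.1)]
  exact lintegral_subtype_comap measurableSet_Ioi (fun r => ENNReal.ofReal (r ^ n) * h r)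

/-- shear along `e` -/
noncomputable def shear (e : E) (a b : ℝ) (x : E) : E := x + (a * inner ℝ e x + b * ‖x‖) • e

theorem shear_continuous (e : E) (a b : ℝ) : Continuous (shear e a b) := by
  unfold shear; fun_prop

/-- derivative of the shear -/
noncomputable def shearDeriv (e : E) (a b : ℝ) (x : E) : E →L[ℝ] E :=
  ContinuousLinearMap.id ℝ E +
    (a • innerSL ℝ e + b • ((‖x‖)⁻¹ • innerSL ℝ x)).smulRight e

theorem shear_hasFDerivAt (e : E) (a b : ℝ) {x : E} (hx : x ≠ 0) :
    HasFDerivAt (shear e a b) (shearDeriv e a b x) x := by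
  have hn : HasFDerivAt (fun x : E => ‖x‖) ((‖x‖)⁻¹ • innerSL ℝ x) x := by
    have := (hasStrictFDerivAt_norm_sq x).hasFDerivAt.sqrt (by simpa using hx)
    simp only [Real.sqrt_sq (norm_nonneg _)] at this
    convert! this using 1
    ext v; simp; field_simp
  have hi : HasFDerivAt (fun x : E => inner ℝ e x) (innerSL ℝ e) x := (innerSL ℝ e).hasFDerivAt
  exact (hasFDerivAt_id x).add (((hi.const_mul a).add (hn.const_mul b)).smul_const e)

theorem shearDeriv_det {e : E} (he : ‖e‖ = 1) (a b : ℝ) (x : E) :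
    (shearDeriv e a b x).det = 1 + a + b * (inner ℝ e x / ‖x‖) := by
  have : ((shearDeriv e a b x : E →L[ℝ] E) : E →ₗ[ℝ] E) = LinearMap.transvection
      ((a • innerSL ℝ e + b • ((‖x‖)⁻¹ • innerSL ℝ x) : E →L[ℝ] ℝ) : E →ₗ[ℝ] ℝ) e := by
    ext v; simp [shearDeriv, LinearMap.transvection]
  rw [ContinuousLinearMap.det, this, LinearMap.transvection.det]
  simp [he, real_inner_comm x e]; ring

theorem inner_shear {e : E} (he : ‖e‖ = 1) (a b : ℝ) (x : E) :
    inner ℝ e (shear e a b x) = (1 + a) * inner ℝ e x + b * ‖x‖ := by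
  simp [shear, inner_add_right, inner_smul_right, he]; ring

theorem norm_sq_shear {e : E} (he : ‖e‖ = 1) (a b : ℝ) (x : E) :
    ‖shear e a b x‖ ^ 2 = ‖x‖ ^ 2 - inner ℝ e x ^ 2 + ((1 + a) * inner ℝ e x + b * ‖x‖) ^ 2 := by
  simp only [shear, norm_add_sq_real, norm_smul, inner_smul_right, real_inner_comm e x, he,
    Real.norm_eq_abs, mul_one, sq_abs]
  ring

theorem abs_inner_le {e : E} (he : ‖e‖ = 1) (x : E) : |inner ℝ e x| ≤ ‖x‖ := by
  simpa [he] using abs_real_inner_le_norm e x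

/-- conformal factor -/
noncomputable def rho (e : E) (t : ℝ) (x : E) : ℝ := Real.cosh t * ‖x‖ + Real.sinh t * inner ℝ e x

theorem rho_pos {e : E} (he : ‖e‖ = 1) (t : ℝ) {x : E} (hx : x ≠ 0) : 0 < rho e t x := by
  have h1 := abs_le.1 (abs_inner_le he x)
  have h2 : 0 < ‖x‖ := norm_pos_iff.2 hx
  unfold rho
  rw [Real.cosh_eq, Real.sinh_eq]
  have := Real.exp_pos t
  have := Real.exp_pos (-t)
  have e1 : (Real.exp t + Real.exp (-t)) / 2 * ‖x‖ + (Real.exp t - Real.exp (-t)) / 2 * inner ℝ e x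
    = Real.exp t * ((‖x‖ + inner ℝ e x) / 2) + Real.exp (-t) * ((‖x‖ - inner ℝ e x) / 2) := by ring
  rw [e1]
  rcases le_total 0 (inner ℝ e x) with h | h
  · have : 0 < Real.exp t * ((‖x‖ + inner ℝ e x) / 2) := by positivity
    have : 0 ≤ Real.exp (-t) * ((‖x‖ - inner ℝ e x) / 2) := by
      apply mul_nonneg <;> linarith
    linarith
  · have : 0 ≤ Real.exp t * ((‖x‖ + inner ℝ e x) / 2) := by
      apply mul_nonneg <;> linarith
    have : 0 < Real.exp (-t) * ((‖x‖ - inner ℝ e x) / 2) := by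
      apply _root_.mul_pos <;> linarith
    linarith

/-- the boost acting on `E` identified with the light cone -/
noncomputable def boost (e : E) (t : ℝ) : E → E := shear e (Real.cosh t - 1) (Real.sinh t)

theorem norm_boost {e : E} (he : ‖e‖ = 1) (t : ℝ) (x : E) : ‖boost e t x‖ = rho e t x := by
  have h0 : 0 ≤ rho e t x := by
    by_cases hx : x = 0
    · simp [rho, hx]
    · exact (rho_pos he t hx).le
  rw [← sq_eq_sq₀ (norm_nonneg _) h0, boost, norm_sq_shear he, rho]
  have := Real.cosh_sq t
  linear_combination (inner ℝ e x ^ 2 - ‖x‖ ^ 2) * this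

theorem inner_boost {e : E} (he : ‖e‖ = 1) (t : ℝ) (x : E) :
    inner ℝ e (boost e t x) = Real.cosh t * inner ℝ e x + Real.sinh t * ‖x‖ := by
  rw [boost, inner_shear he]; ring

theorem rho_boost {e : E} (he : ‖e‖ = 1) (t : ℝ) (x : E) : rho e (-t) (boost e t x) = ‖x‖ := by
  rw [rho, norm_boost he, inner_boost he, rho, Real.cosh_neg, Real.sinh_neg]
  linear_combination ‖x‖ * Real.cosh_sq t

theorem boost_boost {e : E} (he : ‖e‖ = 1) (t : ℝ) (x : E) : boost e (-t) (boost e t x) = x := by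
  have h : boost e (-t) (boost e t x) = boost e t x + ((Real.cosh t - 1) *
      (Real.cosh t * inner ℝ e x + Real.sinh t * ‖x‖) - Real.sinh t * rho e t x) • e := by
    conv_lhs => rw [boost]
    rw [shear, inner_boost he, norm_boost he, Real.cosh_neg, Real.sinh_neg]
    congr 2; ring
  rw [h]
  conv_lhs => rw [boost]
  rw [shear, add_assoc, ← add_smul]
  have : (Real.cosh t - 1) * inner ℝ e x + Real.sinh t * ‖x‖ + ((Real.cosh t - 1) *
      (Real.cosh t * inner ℝ e x + Real.sinh t * ‖x‖) - Real.sinh t * rho e t x) = 0 := by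
    rw [rho]; linear_combination inner ℝ e x * Real.cosh_sq t
  rw [this]; simp

theorem boost_ne_zero {e : E} (he : ‖e‖ = 1) (t : ℝ) {x : E} (hx : x ≠ 0) : boost e t x ≠ 0 := by
  rw [← norm_pos_iff, norm_boost he]; exact rho_pos he t hx

theorem boost_smul (e : E) (t : ℝ) (x : E) {r : ℝ} (hr : 0 ≤ r) :
    boost e t (r • x) = r • boost e t x := by
  simp only [boost, shear, smul_add, smul_smul, inner_smul_right, norm_smul,
    Real.norm_of_nonneg hr]
  congr 2; ring

theorem rho_smul (e : E) (t : ℝ) (x : E) {r : ℝ} (hr : 0 ≤ r) :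
    rho e t (r • x) = r * rho e t x := by
  simp only [rho, inner_smul_right, norm_smul, Real.norm_of_nonneg hr]; ring

theorem inner_boost_boost {e : E} (he : ‖e‖ = 1) (t : ℝ) (x y : E) :
    ‖boost e t x‖ * ‖boost e t y‖ - inner ℝ (boost e t x) (boost e t y) =
      ‖x‖ * ‖y‖ - inner ℝ x y := by
  have h : inner ℝ (boost e t x) (boost e t y) = inner ℝ x y - inner ℝ e x * inner ℝ e y +
      (Real.cosh t * inner ℝ e x + Real.sinh t * ‖x‖) *
        (Real.cosh t * inner ℝ e y + Real.sinh t * ‖y‖) := by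
    simp only [boost, shear, inner_add_left, inner_add_right, inner_smul_left, inner_smul_right,
      real_inner_comm e x, real_inner_self_eq_norm_sq, he, conj_trivial]
    ring
  rw [h, norm_boost he, norm_boost he, rho, rho]
  linear_combination (‖x‖ * ‖y‖ - inner ℝ e x * inner ℝ e y) * Real.cosh_sq t

end Geom
end RHLS

namespace RHLS
section Conf

variable {E : Type*} [NormedAddCommGroup E] [InnerProductSpace ℝ E] [FiniteDimensional ℝ E]
  [MeasurableSpace E] [BorelSpace E] 

theorem sphere_ne_zero (ξ : sphere (0 : E) 1) : (ξ : E) ≠ 0 := by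
  rw [← norm_pos_iff]; simp

theorem lintegral_cone [Nontrivial E] {u : E → ℝ} (hu : Continuous u) (hpos : ∀ x ≠ 0, 0 < u x)
    (huh : ∀ (r : ℝ) (x : E), 0 < r → u (r • x) = r * u x) {h : E → ℝ≥0∞} (hh : Measurable h)
    (hhom : ∀ (r : ℝ) (x : E), 0 < r → h (r • x) = h x) {n : ℕ} (hn : Module.finrank ℝ E = n + 1) :
    ∫⁻ x in {x : E | x ≠ 0 ∧ u x < 1}, h x = ENNReal.ofReal (1 / (n + 1)) *
      ∫⁻ ξ : sphere (0 : E) 1, ENNReal.ofReal ((u ξ ^ (n + 1))⁻¹) * h ξ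
        ∂((volume : Measure E).toSphere) := by
  have hms : MeasurableSet {x : E | x ≠ 0 ∧ u x < 1} :=
    (measurableSet_singleton (0 : E)).compl.inter (measurableSet_lt hu.measurable measurable_const)
  rw [← lintegral_indicator hms, lintegral_polar (hh.indicator hms),
    ← lintegral_const_mul _ (by fun_prop)]
  refine lintegral_congr fun ξ => ?_
  have hξ := sphere_ne_zero ξ
  have hu0 := hpos _ hξ
  have e1 : ∀ r : Set.Ioi (0 : ℝ), {x : E | x ≠ 0 ∧ u x < 1}.indicator h (r.1 • ξ.1) =
      (Set.Iio (⟨1 / u ξ, Set.mem_Ioi.2 (by positivity)⟩ : Set.Ioi (0 : ℝ))).indicator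
        (fun _ => h ξ) r := by
    intro r
    have hr : 0 < r.1 := r.2
    have : (r.1 • ξ.1 ∈ {x : E | x ≠ 0 ∧ u x < 1}) ↔
        r ∈ (Set.Iio (⟨1 / u ξ, Set.mem_Ioi.2 (by positivity)⟩ : Set.Ioi (0 : ℝ))) := by
      rw [Set.mem_Iio, ← Subtype.coe_lt_coe, lt_div_iff₀ hu0]
      simp [huh _ _ hr, hr.ne', hξ]
    by_cases hm : r.1 • ξ.1 ∈ {x : E | x ≠ 0 ∧ u x < 1}
    · rw [Set.indicator_of_mem hm, Set.indicator_of_mem (this.1 hm), hhom _ _ hr]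
    · rw [Set.indicator_of_notMem hm, Set.indicator_of_notMem (fun h => hm (this.2 h))]
  simp only [e1]
  rw [lintegral_indicator_const measurableSet_Iio, hn, Nat.add_sub_cancel,
    Measure.volumeIoiPow_apply_Iio, ← mul_assoc, ← ENNReal.ofReal_mul (by positivity), mul_comm]
  congr 2
  simp only [one_div, inv_pow]; ring

/-- conformal map of the sphere -/
noncomputable def conf (e : E) (t : ℝ) (x : E) : E := (rho e t x)⁻¹ • boost e t x

theorem rho_continuous (e : E) (t : ℝ) : Continuous (rho e t) := by unfold rho; fun_prop

theorem boost_continuous (e : E) (t : ℝ) : Continuous (boost e t) := shear_continuous _ _ _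

theorem conf_measurable (e : E) (t : ℝ) : Measurable (conf e t) :=
  (rho_continuous e t).measurable.inv.smul (boost_continuous e t).measurable

theorem norm_conf {e : E} (he : ‖e‖ = 1) (t : ℝ) {x : E} (hx : x ≠ 0) : ‖conf e t x‖ = 1 := by
  have := rho_pos he t hx
  rw [conf, norm_smul, norm_boost he, Real.norm_of_nonneg (by positivity), inv_mul_cancel₀ this.ne']

theorem lintegral_conf [Nontrivial E] {n : ℕ} (hn : Module.finrank ℝ E = n + 1) {e : E}
    (he : ‖e‖ = 1) (t : ℝ) {g : E → ℝ≥0∞} (hg : Measurable g) :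
    ∫⁻ ξ : sphere (0 : E) 1, ENNReal.ofReal ((rho e t ξ ^ n)⁻¹) * g (conf e t ξ)
        ∂((volume : Measure E).toSphere) =
      ∫⁻ ξ : sphere (0 : E) 1, g ξ ∂((volume : Measure E).toSphere) := by
  have himg : boost e t '' {x : E | x ≠ 0 ∧ rho e t x < 1} = {x : E | x ≠ 0 ∧ ‖x‖ < 1} := by
    ext y
    constructor
    · rintro ⟨x, ⟨hx, hx1⟩, rfl⟩
      exact ⟨boost_ne_zero he t hx, by rwa [norm_boost he]⟩
    · rintro ⟨hy, hy1⟩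
      have h1 : boost e t (boost e (-t) y) = y := by
        have := boost_boost he (-t) y
        rwa [neg_neg] at this
      refine ⟨boost e (-t) y, ⟨boost_ne_zero he _ hy, ?_⟩, h1⟩
      rw [← norm_boost he, h1]; exact hy1
  have hms : MeasurableSet {x : E | x ≠ 0 ∧ rho e t x < 1} :=
    (measurableSet_singleton (0 : E)).compl.inter
      (measurableSet_lt (rho_continuous e t).measurable measurable_const)
  have key := lintegral_image_eq_lintegral_abs_det_fderiv_mul (volume : Measure E) hms
    (f := boost e t) (f' := shearDeriv e (Real.cosh t - 1) (Real.sinh t))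
    (fun x hx => (shear_hasFDerivAt _ _ _ hx.1).hasFDerivWithinAt)
    (fun x _ y _ hxy => by rw [← boost_boost he t x, hxy, boost_boost he t y])
    (fun y => g (‖y‖⁻¹ • y))
  rw [himg] at key
  have e2 : ∫⁻ x in {x : E | x ≠ 0 ∧ rho e t x < 1},
      ENNReal.ofReal |(shearDeriv e (Real.cosh t - 1) (Real.sinh t) x).det| *
        g (‖boost e t x‖⁻¹ • boost e t x) =
      ∫⁻ x in {x : E | x ≠ 0 ∧ rho e t x < 1},
      ENNReal.ofReal (rho e t x / ‖x‖) * g (conf e t x) := by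
    refine setLIntegral_congr_fun hms fun x hx => ?_
    have h0 : ‖x‖ ≠ 0 := norm_ne_zero_iff.2 hx.1
    have h1 := rho_pos he t hx.1
    have h2 : (shearDeriv e (Real.cosh t - 1) (Real.sinh t) x).det = rho e t x / ‖x‖ := by
      rw [shearDeriv_det he, rho]; field_simp; ring
    rw [h2, abs_of_pos (by positivity), norm_boost he, conf]
  have hm1 : Measurable fun y : E => g (‖y‖⁻¹ • y) := hg.comp (by fun_prop)
  have hm2 : Measurable fun x : E => ENNReal.ofReal (rho e t x / ‖x‖) * g (conf e t x) :=
    (((rho_continuous e t).measurable.div measurable_norm).ennreal_ofReal).mul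
        (hg.comp (conf_measurable e t))
  rw [e2, lintegral_cone continuous_norm (fun x hx => norm_pos_iff.2 hx)
    (fun r x hr => by rw [norm_smul, Real.norm_of_nonneg hr.le])
    hm1 (fun r x hr => by
      have : r * (r⁻¹ * ‖x‖⁻¹) = ‖x‖⁻¹ := by field_simp
      rw [norm_smul, Real.norm_of_nonneg hr.le, smul_smul, mul_inv, mul_comm, this]) hn,
    lintegral_cone (rho_continuous e t) (fun x hx => rho_pos he t hx)
      (fun r x hr => rho_smul e t x hr.le)
      hm2
      (fun r x hr => by
        have h3 : conf e t (r • x) = conf e t x := by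
          rw [conf, conf, rho_smul e t x hr.le, boost_smul e t x hr.le, smul_smul]
          congr 1; field_simp
        rw [h3, rho_smul e t x hr.le, norm_smul, Real.norm_of_nonneg hr.le,
          mul_div_mul_left _ _ hr.ne']) hn] at key
  have hc0 : ENNReal.ofReal (1 / ((n : ℝ) + 1)) ≠ 0 := by
    rw [Ne, ENNReal.ofReal_eq_zero, not_le]; positivity
  rw [ENNReal.mul_right_inj hc0 ENNReal.ofReal_ne_top] at key
  have e3 : ∀ ξ : sphere (0 : E) 1, ‖(ξ : E)‖ = 1 := fun ξ => by simp
  simp only [e3, one_pow, inv_one, ENNReal.ofReal_one, one_mul, one_smul, div_one] at key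
  rw [key]
  refine lintegral_congr fun ξ => ?_
  have h1 := rho_pos he t (sphere_ne_zero ξ)
  rw [← mul_assoc, ← ENNReal.ofReal_mul (by positivity)]
  congr 2
  rw [pow_succ]; field_simp

end Conf
end RHLS

namespace RHLS
section ConfS

variable {E : Type*} [NormedAddCommGroup E] [InnerProductSpace ℝ E] [FiniteDimensional ℝ E]
  [MeasurableSpace E] [BorelSpace E]

/-- conformal self-map of the sphere -/
noncomputable def confS {e : E} (he : ‖e‖ = 1) (t : ℝ) (ξ : sphere (0 : E) 1) : sphere (0 : E) 1 :=
  ⟨conf e t ξ, by simpa using norm_conf he t (sphere_ne_zero ξ)⟩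

theorem rhoS_pos {e : E} (he : ‖e‖ = 1) (t : ℝ) (ξ : sphere (0 : E) 1) : 0 < rho e t (ξ : E) :=
  rho_pos he t (sphere_ne_zero ξ)

theorem rhoS_eq (e : E) (t : ℝ) (ξ : sphere (0 : E) 1) :
    rho e t (ξ : E) = Real.cosh t + Real.sinh t * inner ℝ e (ξ : E) := by
  simp [rho]

theorem rhoS_continuous (e : E) (t : ℝ) : Continuous fun ξ : sphere (0 : E) 1 => rho e t (ξ : E) :=
  (rho_continuous e t).comp continuous_subtype_val

theorem confS_continuous {e : E} (he : ‖e‖ = 1) (t : ℝ) : Continuous (confS he t) := by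
  refine Continuous.subtype_mk ?_ _
  unfold conf
  exact ((rhoS_continuous e t).inv₀ fun ξ => (rhoS_pos he t ξ).ne').smul
    ((boost_continuous e t).comp continuous_subtype_val)

theorem rho_confS {e : E} (he : ‖e‖ = 1) (t : ℝ) (ξ : sphere (0 : E) 1) :
    rho e (-t) (confS he t ξ : E) = (rho e t (ξ : E))⁻¹ := by
  have h := rhoS_pos he t ξ
  change rho e (-t) (conf e t ξ) = _
  rw [conf, rho_smul _ _ _ (by positivity), rho_boost he]
  simp

theorem dist_confS {e : E} (he : ‖e‖ = 1) (t : ℝ) (ξ η : sphere (0 : E) 1) :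
    dist ξ η ^ 2 = dist (confS he t ξ) (confS he t η) ^ 2 *
      (rho e t (ξ : E) * rho e t (η : E)) := by
  have h1 := rhoS_pos he t ξ
  have h2 := rhoS_pos he t η
  have h := inner_boost_boost he t (ξ : E) (η : E)
  rw [norm_boost he, norm_boost he] at h
  simp only [norm_eq_of_mem_sphere] at h
  have n1 : ‖conf e t (ξ : E)‖ = 1 := norm_conf he t (sphere_ne_zero ξ)
  have n2 : ‖conf e t (η : E)‖ = 1 := norm_conf he t (sphere_ne_zero η)
  rw [Subtype.dist_eq, Subtype.dist_eq, dist_eq_norm, dist_eq_norm, norm_sub_sq_real]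
  change _ = ‖conf e t (ξ : E) - conf e t (η : E)‖ ^ 2 * _
  rw [norm_sub_sq_real, n1, n2, conf, conf, inner_smul_left, inner_smul_right]
  simp only [norm_eq_of_mem_sphere, conj_trivial]
  field_simp
  linear_combination (-2) * h

theorem dist_confS_rpow {e : E} (he : ‖e‖ = 1) (t : ℝ) (ξ η : sphere (0 : E) 1) (γ : ℝ) :
    dist ξ η ^ (2 * γ) = dist (confS he t ξ) (confS he t η) ^ (2 * γ) *
      (rho e t (ξ : E) ^ γ * rho e t (η : E) ^ γ) := by
  have h1 := rhoS_pos he t ξ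
  have h2 := rhoS_pos he t η
  have key : ∀ d : ℝ, 0 ≤ d → d ^ (2 * γ) = (d ^ 2) ^ γ := fun d hd => by
    rw [Real.rpow_mul hd]; norm_num
  rw [key _ dist_nonneg, key _ dist_nonneg, dist_confS he t ξ η,
    Real.mul_rpow (by positivity) (by positivity), Real.mul_rpow h1.le h2.le]

theorem integral_conf [Nontrivial E] {n : ℕ} (hn : Module.finrank ℝ E = n + 1) {e : E}
    (he : ‖e‖ = 1) (t : ℝ) {g : sphere (0 : E) 1 → ℝ} (hg : Continuous g) (hg0 : ∀ ξ, 0 ≤ g ξ) :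
    ∫ ξ, rho e t (ξ : E) ^ (-(n : ℝ)) * g (confS he t ξ) ∂((volume : Measure E).toSphere) =
      ∫ ξ, g ξ ∂((volume : Measure E).toSphere) := by
  have hc : Continuous fun ξ : sphere (0 : E) 1 => rho e t (ξ : E) ^ (-(n : ℝ)) * g (confS he t ξ) :=
    ((rhoS_continuous e t).rpow_const fun ξ => Or.inl (rhoS_pos he t ξ).ne').mul
      (hg.comp (confS_continuous he t))
  rw [integral_eq_lintegral_of_nonneg_ae (ae_of_all _ fun ξ => by
      have := rhoS_pos he t ξ
      have := hg0 (confS he t ξ)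
      simp only [Pi.zero_apply]; positivity) hc.aestronglyMeasurable,
    integral_eq_lintegral_of_nonneg_ae (ae_of_all _ hg0) hg.aestronglyMeasurable]
  congr 1
  obtain ⟨g', hg', hgg⟩ := (MeasurableEmbedding.subtype_coe
    (isClosed_sphere (x := (0 : E)) (ε := 1)).measurableSet).exists_measurable_extend
    hg.measurable.ennreal_ofReal (fun _ => ⟨0⟩)
  have h1 := lintegral_conf hn he t hg'
  have h2 : ∀ ξ : sphere (0 : E) 1, g' ξ = ENNReal.ofReal (g ξ) := fun ξ => congrFun hgg ξ
  have h3 : ∀ ξ : sphere (0 : E) 1, g' (conf e t ξ) = ENNReal.ofReal (g (confS he t ξ)) :=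
    fun ξ => congrFun hgg (confS he t ξ)
  simp only [h2, h3] at h1
  rw [← h1]
  refine lintegral_congr fun ξ => ?_
  have := rhoS_pos he t ξ
  rw [ENNReal.ofReal_mul (by positivity), Real.rpow_neg this.le, Real.rpow_natCast]

/-- the regularised kernel -/
noncomputable def Kf (γ ε : ℝ) (x y : sphere (0 : E) 1) : ℝ := dist x y ^ (2 * γ) + ε

theorem Kf_continuous {γ : ℝ} (hγ : 0 < γ) (ε : ℝ) :
    Continuous (Function.uncurry (Kf (E := E) γ ε)) := by
  unfold Kf Function.uncurry
  exact (continuous_dist.rpow_const fun z => Or.inr (by positivity)).add continuous_const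

/-- the transported function -/
noncomputable def tr {e : E} (he : ‖e‖ = 1) (t r : ℝ) (F : sphere (0 : E) 1 → ℝ)
    (ξ : sphere (0 : E) 1) : ℝ := rho e t (ξ : E) ^ (-r) * F (confS he t ξ)

theorem tr_continuous {e : E} (he : ‖e‖ = 1) (t r : ℝ) {F : sphere (0 : E) 1 → ℝ}
    (hF : Continuous F) : Continuous (tr he t r F) :=
  ((rhoS_continuous e t).rpow_const fun ξ => Or.inl (rhoS_pos he t ξ).ne').mul
      (hF.comp (confS_continuous he t))

theorem tr_pos {e : E} (he : ‖e‖ = 1) (t r : ℝ) {F : sphere (0 : E) 1 → ℝ}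
    (hF : ∀ ξ, 0 < F ξ) (ξ) : 0 < tr he t r F ξ := by
  have := rhoS_pos he t ξ
  have := hF (confS he t ξ)
  unfold tr; positivity

section
variable [Nontrivial E] {n : ℕ} (hn : Module.finrank ℝ E = n + 1) {e : E} (he : ‖e‖ = 1) (t : ℝ)
  {F G : sphere (0 : E) 1 → ℝ} (hF : Continuous F) (hF0 : ∀ ξ, 0 < F ξ)
  (hG : Continuous G) (hG0 : ∀ ξ, 0 < G ξ)
include hn

include hF hF0 in
theorem nm_tr {p r : ℝ} (hpr : p * r = n) :
    nm (volume : Measure E).toSphere p (tr he t r F) = nm (volume : Measure E).toSphere p F := by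
  unfold nm
  congr 1
  rw [← integral_conf hn he t (hF.rpow_const fun ξ => Or.inl (hF0 ξ).ne')
    fun ξ => Real.rpow_nonneg (hF0 ξ).le _]
  refine integral_congr_ae (ae_of_all _ fun ξ => ?_)
  have := rhoS_pos he t ξ
  have := hF0 (confS he t ξ)
  simp only [tr]
  rw [Real.mul_rpow (by positivity) (by positivity), ← Real.rpow_mul (by positivity)]
  congr 2
  linear_combination -hpr

include hF hF0 in
theorem integral_tr (γ : ℝ) :
    ∫ ξ, tr he t (n + γ) F ξ ∂(volume : Measure E).toSphere =
      ∫ ξ, F ξ * rho e (-t) (ξ : E) ^ γ ∂(volume : Measure E).toSphere := by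
  have hc : Continuous fun ξ : sphere (0 : E) 1 => F ξ * rho e (-t) (ξ : E) ^ γ :=
    hF.mul ((rhoS_continuous e (-t)).rpow_const fun ξ => Or.inl (rhoS_pos he (-t) ξ).ne')
  rw [← integral_conf hn he t hc
    fun ξ => mul_nonneg (hF0 ξ).le (Real.rpow_nonneg (rhoS_pos he (-t) ξ).le _)]
  refine integral_congr_ae (ae_of_all _ fun ξ => ?_)
  have := rhoS_pos he t ξ
  simp only [tr]
  rw [rho_confS, Real.inv_rpow this.le, ← Real.rpow_neg this.le, neg_add, Real.rpow_add this]
  ring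

include hF hF0 hG hG0 in
theorem form_tr {γ : ℝ} (hγ : 0 < γ) :
    ∫ ξ, tr he t (n + γ) F ξ * pot (volume : Measure E).toSphere (Kf γ 0) (tr he t (n + γ) G) ξ
      ∂(volume : Measure E).toSphere =
    ∫ ξ, F ξ * pot (volume : Measure E).toSphere (Kf γ 0) G ξ
      ∂(volume : Measure E).toSphere := by
  have hpc := pot_continuous (μ := (volume : Measure E).toSphere) (Kf_continuous hγ 0)
    (adm_of_continuous hG hG0)
  have hK0 : ∀ x y : sphere (0 : E) 1, 0 ≤ Kf γ 0 x y := fun x y => by unfold Kf; positivity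
  have hc : Continuous fun ξ => F ξ * pot (volume : Measure E).toSphere (Kf γ 0) G ξ := hF.mul hpc
  rw [← integral_conf hn he t hc fun ξ => mul_nonneg (hF0 ξ).le
    (integral_nonneg fun y => mul_nonneg (hK0 _ _) (hG0 y).le)]
  refine integral_congr_ae (ae_of_all _ fun ξ => ?_)
  have hr := rhoS_pos he t ξ
  have key : pot (volume : Measure E).toSphere (Kf γ 0) (tr he t (n + γ) G) ξ =
      rho e t (ξ : E) ^ γ * pot (volume : Measure E).toSphere (Kf γ 0) G (confS he t ξ) := by
    have hk : Continuous fun η => Kf γ 0 (confS he t ξ) η * G η :=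
      ((Kf_continuous hγ 0).comp (by fun_prop : Continuous fun y => (confS he t ξ, y))).mul hG
    rw [pot, pot, ← integral_conf hn he t hk fun η => mul_nonneg (hK0 _ _) (hG0 η).le,
      ← integral_const_mul]
    refine integral_congr_ae (ae_of_all _ fun η => ?_)
    have hr' := rhoS_pos he t η
    simp only [tr, Kf, add_zero]
    rw [dist_confS_rpow he t ξ η, neg_add, Real.rpow_add hr', Real.rpow_neg hr'.le γ]
    field_simp
  simp only
  rw [key, tr, neg_add, Real.rpow_add hr, Real.rpow_neg hr.le γ]
  field_simp

end

theorem pot_Kf {γ : ℝ} (hγ : 0 < γ) (ε : ℝ) {G : sphere (0 : E) 1 → ℝ} (hG : Adm G)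
    (ξ : sphere (0 : E) 1) :
    pot (volume : Measure E).toSphere (Kf γ ε) G ξ =
      pot (volume : Measure E).toSphere (Kf γ 0) G ξ + ε * ∫ η, G η ∂(volume : Measure E).toSphere := by
  have h1 := kernel_mul_integrable (μ := (volume : Measure E).toSphere) (Kf_continuous hγ 0) hG ξ
  have h2 : Integrable (fun η => ε * G η) (volume : Measure E).toSphere :=
    (hG.integrable (μ := (volume : Measure E).toSphere)).const_mul ε
  have h3 := integral_add h1 h2
  rw [integral_const_mul] at h3
  unfold pot
  rw [← h3]
  refine integral_congr_ae (ae_of_all _ fun η => ?_)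
  simp only [Kf]; ring

theorem form_Kf {γ : ℝ} (hγ : 0 < γ) (ε : ℝ) {F G : sphere (0 : E) 1 → ℝ} (hF : Adm F) (hG : Adm G) :
    ∫ ξ, F ξ * pot (volume : Measure E).toSphere (Kf γ ε) G ξ ∂(volume : Measure E).toSphere =
    (∫ ξ, F ξ * pot (volume : Measure E).toSphere (Kf γ 0) G ξ ∂(volume : Measure E).toSphere) +
      ε * ((∫ η, F η ∂(volume : Measure E).toSphere) * ∫ η, G η ∂(volume : Measure E).toSphere) := by
  have hpc := pot_continuous (μ := (volume : Measure E).toSphere) (Kf_continuous hγ 0) hG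
  have hi : Integrable (fun ξ => F ξ * pot (volume : Measure E).toSphere (Kf γ 0) G ξ)
      (volume : Measure E).toSphere :=
    hF.integrable.mul_bdd hpc.aestronglyMeasurable
      (c := ‖(⟨_, hpc⟩ : C(sphere (0 : E) 1, ℝ))‖)
      (ae_of_all _ fun y => (⟨_, hpc⟩ : C(sphere (0 : E) 1, ℝ)).norm_coe_le_norm y)
  have : ∀ ξ, F ξ * pot (volume : Measure E).toSphere (Kf γ ε) G ξ =
      F ξ * pot (volume : Measure E).toSphere (Kf γ 0) G ξ +
        F ξ * (ε * ∫ η, G η ∂(volume : Measure E).toSphere) := fun ξ => by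
    rw [pot_Kf hγ ε hG]; ring
  simp only [this]
  rw [integral_add hi (hF.integrable.mul_const _), integral_mul_const]
  ring

theorem conf_ineq [Nontrivial E] {n : ℕ} (hn : Module.finrank ℝ E = n + 1) {e : E} (he : ‖e‖ = 1)
    {F G : sphere (0 : E) 1 → ℝ} (hF : Continuous F) (hF0 : ∀ ξ, 0 < F ξ)
    (hG : Continuous G) (hG0 : ∀ ξ, 0 < G ξ) {γ ε m p : ℝ} (hγ : 0 < γ) (hε : 0 < ε)
    (hp : p * (n + γ) = n)
    (hmin : ∀ F' G', Adm F' → Adm G' → m * nm (volume : Measure E).toSphere p F' *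
      nm (volume : Measure E).toSphere p G' ≤
      ∫ x, F' x * pot (volume : Measure E).toSphere (Kf γ ε) G' x ∂(volume : Measure E).toSphere)
    (heq : ∫ x, F x * pot (volume : Measure E).toSphere (Kf γ ε) G x
      ∂(volume : Measure E).toSphere =
      m * nm (volume : Measure E).toSphere p F * nm (volume : Measure E).toSphere p G) (t : ℝ) :
    (∫ η, F η ∂(volume : Measure E).toSphere) * ∫ η, G η ∂(volume : Measure E).toSphere ≤
    (∫ η, F η * rho e t (η : E) ^ γ ∂(volume : Measure E).toSphere) *
      ∫ η, G η * rho e t (η : E) ^ γ ∂(volume : Measure E).toSphere := by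
  have aF := adm_of_continuous hF hF0
  have aG := adm_of_continuous hG hG0
  have aF' := adm_of_continuous (tr_continuous he (-t) (n + γ) hF) (tr_pos he (-t) (n + γ) hF0)
  have aG' := adm_of_continuous (tr_continuous he (-t) (n + γ) hG) (tr_pos he (-t) (n + γ) hG0)
  have h := hmin _ _ aF' aG'
  rw [nm_tr hn he (-t) hF hF0 hp, nm_tr hn he (-t) hG hG0 hp, ← heq, form_Kf hγ ε aF aG,
    form_Kf hγ ε aF' aG', form_tr hn he (-t) hF hF0 hG hG0 hγ, integral_tr hn he (-t) hF hF0,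
    integral_tr hn he (-t) hG hG0, neg_neg] at h
  exact le_of_mul_le_mul_left (by linarith) hε

theorem hasDerivAt_rho_integral {e : E} (he : ‖e‖ = 1) {F : sphere (0 : E) 1 → ℝ}
    (hF : Continuous F) (γ : ℝ) :
    HasDerivAt (fun t => ∫ η, F η * rho e t (η : E) ^ γ ∂(volume : Measure E).toSphere)
      (γ * ∫ η, F η * inner ℝ e (η : E) ∂(volume : Measure E).toSphere) 0 := by
  have hrc : ∀ t (g : ℝ), Continuous fun η : sphere (0 : E) 1 => rho e t (η : E) ^ g := fun t g =>
    (rhoS_continuous e t).rpow_const fun ξ => Or.inl (rhoS_pos he t ξ).ne'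
  have hintg : ∀ {f : sphere (0 : E) 1 → ℝ}, Continuous f →
      Integrable f (volume : Measure E).toSphere := fun hf =>
    hf.integrable_of_hasCompactSupport (HasCompactSupport.of_compactSpace _)
  have hcF : Continuous fun z : sphere (0 : E) 1 × Set.Icc (-1 : ℝ) 1 =>
      |F z.1 * (γ * rho e z.2 (z.1 : E) ^ (γ - 1) *
        (Real.sinh z.2 + Real.cosh z.2 * inner ℝ e (z.1 : E)))| := by
    have : Continuous fun z : sphere (0 : E) 1 × Set.Icc (-1 : ℝ) 1 => rho e z.2 (z.1 : E) := by
      unfold rho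
      fun_prop
    have h2 := this.rpow_const (p := γ - 1) fun z => Or.inl (rhoS_pos he z.2 z.1).ne'
    fun_prop
  obtain ⟨C, hC⟩ := isCompact_univ.bddAbove_image hcF.continuousOn
  have hd := hasDerivAt_integral_of_dominated_loc_of_deriv_le
    (μ := (volume : Measure E).toSphere) (F := fun t η => F η * rho e t (η : E) ^ γ)
    (F' := fun t η => F η * (γ * rho e t (η : E) ^ (γ - 1) *
      (Real.sinh t + Real.cosh t * inner ℝ e (η : E)))) (x₀ := 0) (s := Set.Icc (-1) 1)
    (bound := fun _ => C)
    (Icc_mem_nhds (by norm_num) (by norm_num))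
    (Filter.Eventually.of_forall fun t => (hF.mul (hrc t γ)).aestronglyMeasurable)
    (hintg (hF.mul (hrc 0 γ)))
    ((hF.mul ((continuous_const.mul (hrc 0 (γ - 1))).mul (by fun_prop))).aestronglyMeasurable)
    (ae_of_all _ fun η t ht => hC ⟨(η, ⟨t, ht⟩), Set.mem_univ _, rfl⟩)
    (integrable_const _)
    (ae_of_all _ fun η t ht => by
      have h1 : HasDerivAt (fun t => rho e t (η : E))
          (Real.sinh t + Real.cosh t * inner ℝ e (η : E)) t := by
        simp only [rhoS_eq]
        exact (Real.hasDerivAt_cosh t).add ((Real.hasDerivAt_sinh t).mul_const _)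
      have h2 := (h1.rpow_const (p := γ) (Or.inl (rhoS_pos he t η).ne')).const_mul (F η)
      convert! h2 using 1
      ring)
  have h3 := hd.2
  convert! h3 using 1
  rw [← integral_const_mul]
  refine integral_congr_ae (ae_of_all _ fun η => ?_)
  simp [rho]; ring

theorem conf_moment [Nontrivial E] {n : ℕ} (hn : Module.finrank ℝ E = n + 1) {e : E} (he : ‖e‖ = 1)
    {F G : sphere (0 : E) 1 → ℝ} (hF : Continuous F) (hF0 : ∀ ξ, 0 < F ξ)
    (hG : Continuous G) (hG0 : ∀ ξ, 0 < G ξ) {γ ε m p : ℝ} (hγ : 0 < γ) (hε : 0 < ε)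
    (hp : p * (n + γ) = n)
    (hmin : ∀ F' G', Adm F' → Adm G' → m * nm (volume : Measure E).toSphere p F' *
      nm (volume : Measure E).toSphere p G' ≤
      ∫ x, F' x * pot (volume : Measure E).toSphere (Kf γ ε) G' x ∂(volume : Measure E).toSphere)
    (heq : ∫ x, F x * pot (volume : Measure E).toSphere (Kf γ ε) G x
      ∂(volume : Measure E).toSphere =
      m * nm (volume : Measure E).toSphere p F * nm (volume : Measure E).toSphere p G) :
    (∫ η, F η * inner ℝ e (η : E) ∂(volume : Measure E).toSphere) *
        (∫ η, G η ∂(volume : Measure E).toSphere) +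
      (∫ η, F η ∂(volume : Measure E).toSphere) *
        (∫ η, G η * inner ℝ e (η : E) ∂(volume : Measure E).toSphere) = 0 := by
  have hd := (hasDerivAt_rho_integral he hF γ).mul (hasDerivAt_rho_integral he hG γ)
  have r0 : ∀ η : sphere (0 : E) 1, rho e 0 (η : E) = 1 := fun η => by simp [rho]
  have hmn : IsLocalMin ((fun t => ∫ η, F η * rho e t (η : E) ^ γ ∂(volume : Measure E).toSphere) *
      fun t => ∫ η, G η * rho e t (η : E) ^ γ ∂(volume : Measure E).toSphere) 0 := by
    refine Filter.Eventually.of_forall fun t => ?_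
    have := conf_ineq hn he hF hF0 hG hG0 hγ hε hp hmin heq t
    simpa [r0] using this
  have h := hmn.hasDerivAt_eq_zero hd
  simp only [r0, Real.one_rpow, mul_one] at h
  have : γ * ((∫ η, F η * inner ℝ e (η : E) ∂(volume : Measure E).toSphere) *
        (∫ η, G η ∂(volume : Measure E).toSphere) +
      (∫ η, F η ∂(volume : Measure E).toSphere) *
        (∫ η, G η * inner ℝ e (η : E) ∂(volume : Measure E).toSphere)) = 0 := by
    linear_combination h
  exact (mul_eq_zero.1 this).resolve_left hγ.ne'

end ConfS
end RHLS

namespace RHLS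
section Refl

variable {E : Type*} [NormedAddCommGroup E] [InnerProductSpace ℝ E] [FiniteDimensional ℝ E]
  [MeasurableSpace E] [BorelSpace E]

/-- action of a linear isometry on the sphere -/
noncomputable def isoS (L : E ≃ₗᵢ[ℝ] E) (ξ : sphere (0 : E) 1) : sphere (0 : E) 1 :=
  ⟨L ξ, by simp⟩

theorem isoS_continuous (L : E ≃ₗᵢ[ℝ] E) : Continuous (isoS L) :=
  Continuous.subtype_mk (L.continuous.comp continuous_subtype_val) _

theorem isoS_injective (L : E ≃ₗᵢ[ℝ] E) : Function.Injective (isoS L) := fun _ _ h =>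
  Subtype.ext (L.injective (congrArg Subtype.val h))

open scoped Pointwise in
theorem isoS_mp (L : E ≃ₗᵢ[ℝ] E) : MeasurePreserving (isoS L) (volume : Measure E).toSphere
    (volume : Measure E).toSphere := by
  refine ⟨(isoS_continuous L).measurable, Measure.ext fun s hs => ?_⟩
  rw [Measure.map_apply (isoS_continuous L).measurable hs,
    Measure.toSphere_apply' _ ((isoS_continuous L).measurable hs), Measure.toSphere_apply' _ hs]
  congr 1
  have hset : Set.Ioo (0 : ℝ) 1 • ((↑) '' (isoS L ⁻¹' s) : Set E) =
      L ⁻¹' (Set.Ioo (0 : ℝ) 1 • ((↑) '' s : Set E)) := by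
    ext x
    simp only [Set.mem_smul, Set.mem_image, Set.mem_preimage]
    constructor
    · rintro ⟨r, hr, _, ⟨ξ, hξ, rfl⟩, rfl⟩
      exact ⟨r, hr, _, ⟨_, hξ, rfl⟩, by simp [isoS]⟩
    · rintro ⟨r, hr, _, ⟨ξ, hξ, rfl⟩, hx⟩
      refine ⟨r, hr, _, ⟨isoS L.symm ξ, ?_, rfl⟩, ?_⟩
      · have : isoS L (isoS L.symm ξ) = ξ := Subtype.ext (by simp [isoS])
        rwa [this]
      · apply L.injective
        simp [isoS, hx]
  rw [hset]
  exact L.measurePreserving.measure_preimage_equiv (f := L.toHomeomorph.toMeasurableEquiv) _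

theorem isoS_integral (L : E ≃ₗᵢ[ℝ] E) (g : sphere (0 : E) 1 → ℝ) :
    ∫ ξ, g (isoS L ξ) ∂(volume : Measure E).toSphere = ∫ ξ, g ξ ∂(volume : Measure E).toSphere :=
  (isoS_mp L).integral_comp ((isoS_continuous L).measurableEmbedding (isoS_injective L)) g

/-- reflection in the hyperplane orthogonal to `e` -/
noncomputable def rf (e : E) : E ≃ₗᵢ[ℝ] E := (ℝ ∙ e)ᗮ.reflection

theorem rf_apply {e : E} (he : ‖e‖ = 1) (x : E) : rf e x = x - (2 * inner ℝ e x) • e := by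
  rw [rf, Submodule.reflection_orthogonal_apply, Submodule.reflection_singleton_apply, he]
  simp [mul_smul, two_smul]

/-- reflection of the sphere -/
noncomputable def sig (e : E) : sphere (0 : E) 1 → sphere (0 : E) 1 := isoS (rf e)

theorem sig_val {e : E} (he : ‖e‖ = 1) (ξ : sphere (0 : E) 1) :
    (sig e ξ : E) = (ξ : E) - (2 * inner ℝ e (ξ : E)) • e := rf_apply he _

theorem sig_sig (e : E) (ξ : sphere (0 : E) 1) : sig e (sig e ξ) = ξ :=
  Subtype.ext (by simp [sig, isoS, rf])

theorem inner_sig {e : E} (he : ‖e‖ = 1) (ξ : sphere (0 : E) 1) :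
    inner ℝ e (sig e ξ : E) = - inner ℝ e (ξ : E) := by
  rw [sig_val he, inner_sub_right, inner_smul_right, real_inner_self_eq_norm_sq, he]; ring

theorem dist_sig_sig (e : E) (ξ η : sphere (0 : E) 1) : dist (sig e ξ) (sig e η) = dist ξ η := by
  rw [Subtype.dist_eq, Subtype.dist_eq]; exact (rf e).dist_map _ _

theorem dist_sig_left (e : E) (ξ η : sphere (0 : E) 1) : dist (sig e ξ) η = dist ξ (sig e η) := by
  rw [← dist_sig_sig e ξ, sig_sig]

theorem dist_sig {e : E} (he : ‖e‖ = 1) (ξ η : sphere (0 : E) 1) :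
    dist ξ (sig e η) ^ 2 = dist ξ η ^ 2 + 4 * (inner ℝ e (ξ : E) * inner ℝ e (η : E)) := by
  rw [Subtype.dist_eq, Subtype.dist_eq, dist_eq_norm, dist_eq_norm, norm_sub_sq_real,
    norm_sub_sq_real]
  simp only [norm_eq_of_mem_sphere]
  rw [sig_val he, inner_sub_right, inner_smul_right, real_inner_comm e (ξ : E)]
  ring

theorem sig_eq_self {e : E} (he : ‖e‖ = 1) {ξ : sphere (0 : E) 1} (h : inner ℝ e (ξ : E) = 0) :
    sig e ξ = ξ := Subtype.ext (by rw [sig_val he, h]; simp)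

theorem sig_continuous (e : E) : Continuous (sig e) := isoS_continuous _

/-- polarization -/
noncomputable def pol (e : E) (F : sphere (0 : E) 1 → ℝ) (ξ : sphere (0 : E) 1) : ℝ :=
  if 0 ≤ inner ℝ e (ξ : E) then max (F ξ) (F (sig e ξ)) else min (F ξ) (F (sig e ξ))

theorem pol_adm {e : E} {F : sphere (0 : E) 1 → ℝ} (hF : Adm F) : Adm (pol e F) := by
  obtain ⟨hm, a, b, ha, hab⟩ := hF
  have hm' : Measurable fun ξ => F (sig e ξ) := hm.comp (sig_continuous e).measurable
  refine ⟨Measurable.ite (measurableSet_le measurable_const (by fun_prop)) (hm.max hm')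
    (hm.min hm'), a, b, ha, fun ξ => ?_⟩
  have h1 := hab ξ
  have h2 := hab (sig e ξ)
  unfold pol
  split_ifs
  · exact ⟨le_max_of_le_left h1.1, max_le h1.2 h2.2⟩
  · exact ⟨le_min h1.1 h2.1, min_le_of_left_le h1.2⟩

theorem pol_cases {e : E} (he : ‖e‖ = 1) (F : sphere (0 : E) 1 → ℝ) (ξ : sphere (0 : E) 1) :
    (0 ≤ inner ℝ e (ξ : E) ∧ pol e F ξ = max (F ξ) (F (sig e ξ)) ∧
      pol e F (sig e ξ) = min (F ξ) (F (sig e ξ))) ∨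
    (inner ℝ e (ξ : E) ≤ 0 ∧ pol e F ξ = min (F ξ) (F (sig e ξ)) ∧
      pol e F (sig e ξ) = max (F ξ) (F (sig e ξ))) := by
  rcases lt_trichotomy (inner ℝ e (ξ : E)) 0 with h | h | h
  · right
    refine ⟨h.le, ?_, ?_⟩
    · rw [pol, if_neg (not_le.2 h)]
    · rw [pol, if_pos (by rw [inner_sig he]; linarith), sig_sig, max_comm]
  · left
    refine ⟨h.ge, ?_, ?_⟩
    · rw [pol, if_pos h.ge]
    · rw [sig_eq_self he h, min_self, pol, if_pos h.ge, sig_eq_self he h, max_self]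
  · left
    refine ⟨h.le, ?_, ?_⟩
    · rw [pol, if_pos h.le]
    · rw [pol, if_neg (by rw [inner_sig he]; linarith), sig_sig, min_comm]

theorem pol_nm {e : E} (he : ‖e‖ = 1) {F : sphere (0 : E) 1 → ℝ} (hF : Adm F) (p : ℝ) :
    nm (volume : Measure E).toSphere p (pol e F) = nm (volume : Measure E).toSphere p F := by
  unfold nm
  congr 1
  have h : ∀ {f : sphere (0 : E) 1 → ℝ}, Adm f → 2 * ∫ ξ, f ξ ^ p ∂(volume : Measure E).toSphere =
      ∫ ξ, (f ξ ^ p + f (sig e ξ) ^ p) ∂(volume : Measure E).toSphere := by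
    intro f hf
    have hi : Integrable (fun ξ => f ξ ^ p) (volume : Measure E).toSphere := (hf.rpow p).integrable
    have hi' : Integrable (fun ξ => f (sig e ξ) ^ p) (volume : Measure E).toSphere :=
      (isoS_mp (rf e)).integrable_comp_of_integrable hi
    have h2 := isoS_integral (rf e) (fun ξ => f ξ ^ p)
    change ∫ ξ, f (sig e ξ) ^ p ∂_ = _ at h2
    rw [integral_add hi hi', h2]
    exact two_mul _
  have h1 := h (pol_adm (e := e) hF)
  have h2 := h hF
  have : ∀ ξ, pol e F ξ ^ p + pol e F (sig e ξ) ^ p = F ξ ^ p + F (sig e ξ) ^ p := by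
    intro ξ
    rcases pol_cases he F ξ with ⟨-, h1, h2⟩ | ⟨-, h1, h2⟩ <;> rw [h1, h2] <;>
      rcases le_total (F ξ) (F (sig e ξ)) with h | h <;> simp [h, add_comm]
  simp only [this] at h1
  linarith

theorem form_sig (e : E) {γ ε : ℝ} (hγ : 0 < γ) {F G : sphere (0 : E) 1 → ℝ}
    (hF : Adm F) (hG : Adm G) :
    Integrable (fun z : sphere (0 : E) 1 × sphere (0 : E) 1 =>
      (F z.1 + F (sig e z.1)) * (G z.2 + G (sig e z.2)) * (Kf γ ε z.1 z.2 + Kf γ ε z.1 (sig e z.2)) +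
      (F z.1 - F (sig e z.1)) * (G z.2 - G (sig e z.2)) * (Kf γ ε z.1 z.2 - Kf γ ε z.1 (sig e z.2)))
      ((volume : Measure E).toSphere.prod (volume : Measure E).toSphere) ∧
    8 * ∫ x, F x * pot (volume : Measure E).toSphere (Kf γ ε) G x ∂(volume : Measure E).toSphere =
    ∫ z : sphere (0 : E) 1 × sphere (0 : E) 1,
      ((F z.1 + F (sig e z.1)) * (G z.2 + G (sig e z.2)) *
        (Kf γ ε z.1 z.2 + Kf γ ε z.1 (sig e z.2)) +
      (F z.1 - F (sig e z.1)) * (G z.2 - G (sig e z.2)) *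
        (Kf γ ε z.1 z.2 - Kf γ ε z.1 (sig e z.2)))
      ∂((volume : Measure E).toSphere.prod (volume : Measure E).toSphere) := by
  have hKc := Kf_continuous (E := E) hγ ε
  set μ := (volume : Measure E).toSphere with hμ
  have m1 : MeasurePreserving (sig e) μ μ := isoS_mp (rf e)
  have me : MeasurableEmbedding (sig e) :=
    (isoS_continuous (rf e)).measurableEmbedding (isoS_injective (rf e))
  have p1 := m1.prod (MeasurePreserving.id μ)
  have p2 := (MeasurePreserving.id μ).prod m1
  have p3 := m1.prod m1
  have mid : MeasurableEmbedding (id : sphere (0 : E) 1 → sphere (0 : E) 1) := MeasurableEmbedding.id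
  have q1 := me.prodMap mid
  have q2 := MeasurableEmbedding.prodMap mid me
  have q3 := me.prodMap me
  have hi := kernel_prod_integrable (μ := μ) hKc hF hG
  have i1 := p1.integral_comp q1 (fun z : sphere (0 : E) 1 × sphere (0 : E) 1 => F z.1 * G z.2 * Kf γ ε z.1 z.2)
  have i2 := p2.integral_comp q2 (fun z : sphere (0 : E) 1 × sphere (0 : E) 1 => F z.1 * G z.2 * Kf γ ε z.1 z.2)
  have i3 := p3.integral_comp q3 (fun z : sphere (0 : E) 1 × sphere (0 : E) 1 => F z.1 * G z.2 * Kf γ ε z.1 z.2)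
  have j1 := p1.integrable_comp_of_integrable hi
  have j2 := p2.integrable_comp_of_integrable hi
  have j3 := p3.integrable_comp_of_integrable hi
  have hfun : (fun z : sphere (0 : E) 1 × sphere (0 : E) 1 =>
      (F z.1 + F (sig e z.1)) * (G z.2 + G (sig e z.2)) * (Kf γ ε z.1 z.2 + Kf γ ε z.1 (sig e z.2)) +
      (F z.1 - F (sig e z.1)) * (G z.2 - G (sig e z.2)) * (Kf γ ε z.1 z.2 - Kf γ ε z.1 (sig e z.2))) =
      fun z => 2 * ((F z.1 * G z.2 * Kf γ ε z.1 z.2 +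
        F (sig e z.1) * G z.2 * Kf γ ε (sig e z.1) z.2) +
        (F z.1 * G (sig e z.2) * Kf γ ε z.1 (sig e z.2) +
        F (sig e z.1) * G (sig e z.2) * Kf γ ε (sig e z.1) (sig e z.2))) := by
    funext z
    have k1 : Kf γ ε (sig e z.1) z.2 = Kf γ ε z.1 (sig e z.2) := by
      unfold Kf; rw [dist_sig_left]
    have k2 : Kf γ ε (sig e z.1) (sig e z.2) = Kf γ ε z.1 z.2 := by
      unfold Kf; rw [dist_sig_sig]
    rw [k1, k2]; ring
  have hadd1 := hi.add j1
  have hadd2 := j2.add j3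
  have hall := hadd1.add hadd2
  rw [hfun]
  refine ⟨hall.const_mul 2, ?_⟩
  rw [integral_const_mul, form_eq_prod hKc hF hG]
  have e1 := integral_add hi j1
  have e2 := integral_add j2 j3
  have e3 := integral_add hadd1 hadd2
  simp only [Pi.add_apply, Function.comp_apply, Prod.map_fst, Prod.map_snd, id] at e1 e2 e3 i1 i2 i3
  rw [e3, e1, e2, i1, i2, i3]
  ring

theorem Kf_sig_sign {e : E} (he : ‖e‖ = 1) {γ : ℝ} (hγ : 0 < γ) (ε : ℝ) (ξ η : sphere (0 : E) 1) :
    (0 < inner ℝ e (ξ : E) * inner ℝ e (η : E) → Kf γ ε ξ η < Kf γ ε ξ (sig e η)) ∧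
    (inner ℝ e (ξ : E) * inner ℝ e (η : E) < 0 → Kf γ ε ξ (sig e η) < Kf γ ε ξ η) := by
  have h := dist_sig he ξ η
  unfold Kf
  constructor <;> intro h0
  · have : dist ξ η < dist ξ (sig e η) := lt_of_pow_lt_pow_left₀ 2 dist_nonneg (by linarith)
    have := Real.rpow_lt_rpow dist_nonneg this (by positivity : 0 < 2 * γ)
    linarith
  · have : dist ξ (sig e η) < dist ξ η := lt_of_pow_lt_pow_left₀ 2 dist_nonneg (by linarith)
    have := Real.rpow_lt_rpow dist_nonneg this (by positivity : 0 < 2 * γ)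
    linarith

theorem Kf_sig_zero {e : E} (he : ‖e‖ = 1) {γ : ℝ} (ε : ℝ) (ξ η : sphere (0 : E) 1)
    (h0 : inner ℝ e (ξ : E) * inner ℝ e (η : E) = 0) : Kf γ ε ξ (sig e η) = Kf γ ε ξ η := by
  have h := dist_sig he ξ η
  rw [h0, mul_zero, add_zero] at h
  unfold Kf
  rw [(sq_eq_sq₀ dist_nonneg dist_nonneg).1 h]

theorem pol_add {e : E} (he : ‖e‖ = 1) (F : sphere (0 : E) 1 → ℝ) (ξ : sphere (0 : E) 1) :
    pol e F ξ + pol e F (sig e ξ) = F ξ + F (sig e ξ) := by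
  rcases pol_cases he F ξ with ⟨-, h1, h2⟩ | ⟨-, h1, h2⟩ <;> rw [h1, h2]
  · exact max_add_min _ _
  · exact min_add_max _ _

theorem pol_sub {e : E} (he : ‖e‖ = 1) (F : sphere (0 : E) 1 → ℝ) (ξ : sphere (0 : E) 1) :
    (0 ≤ inner ℝ e (ξ : E) ∧ pol e F ξ - pol e F (sig e ξ) = |F ξ - F (sig e ξ)|) ∨
    (inner ℝ e (ξ : E) ≤ 0 ∧ pol e F ξ - pol e F (sig e ξ) = -|F ξ - F (sig e ξ)|) := by
  rcases pol_cases he F ξ with ⟨h, h1, h2⟩ | ⟨h, h1, h2⟩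
  · exact Or.inl ⟨h, by rw [h1, h2, max_sub_min_eq_abs']⟩
  · exact Or.inr ⟨h, by rw [h1, h2, ← neg_sub, max_sub_min_eq_abs']⟩

theorem pol_diff {e : E} (he : ‖e‖ = 1) {γ : ℝ} (hγ : 0 < γ) (ε : ℝ) (F G : sphere (0 : E) 1 → ℝ)
    (ξ η : sphere (0 : E) 1) :
    (pol e F ξ - pol e F (sig e ξ)) * (pol e G η - pol e G (sig e η)) *
        (Kf γ ε ξ η - Kf γ ε ξ (sig e η)) =
      - |(F ξ - F (sig e ξ)) * (G η - G (sig e η)) * (Kf γ ε ξ η - Kf γ ε ξ (sig e η))| := by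
  have hs := Kf_sig_sign he hγ ε ξ η
  have hz := Kf_sig_zero he (γ := γ) ε ξ η
  have hle : 0 ≤ inner ℝ e (ξ : E) * inner ℝ e (η : E) → Kf γ ε ξ η - Kf γ ε ξ (sig e η) ≤ 0 := by
    intro h
    rcases h.eq_or_lt with h | h
    · rw [hz h.symm]; simp
    · linarith [hs.1 h]
  have hge : inner ℝ e (ξ : E) * inner ℝ e (η : E) ≤ 0 → 0 ≤ Kf γ ε ξ η - Kf γ ε ξ (sig e η) := by
    intro h
    rcases h.eq_or_lt with h | h
    · rw [hz h]; simp
    · linarith [hs.2 h]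
  rw [abs_mul, abs_mul]
  rcases pol_sub he F ξ with ⟨h1, h2⟩ | ⟨h1, h2⟩ <;>
    rcases pol_sub he G η with ⟨h3, h4⟩ | ⟨h3, h4⟩ <;> rw [h2, h4]
  · rw [abs_of_nonpos (hle (mul_nonneg h1 h3))]; ring
  · rw [abs_of_nonneg (hge (mul_nonpos_of_nonneg_of_nonpos h1 h3))]; ring
  · rw [abs_of_nonneg (hge (mul_nonpos_of_nonpos_of_nonneg h1 h3))]; ring
  · rw [abs_of_nonpos (hle (mul_nonneg_of_nonpos_of_nonpos h1 h3))]; ring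

theorem pol_sign {e : E} (he : ‖e‖ = 1)
    {F G : sphere (0 : E) 1 → ℝ} (hF : Continuous F) (hF0 : ∀ ξ, 0 < F ξ)
    (hG : Continuous G) (hG0 : ∀ ξ, 0 < G ξ) {γ ε m p : ℝ} (hγ : 0 < γ)
    (hmin : ∀ F' G', Adm F' → Adm G' → m * nm (volume : Measure E).toSphere p F' *
      nm (volume : Measure E).toSphere p G' ≤
      ∫ x, F' x * pot (volume : Measure E).toSphere (Kf γ ε) G' x ∂(volume : Measure E).toSphere)
    (heq : ∫ x, F x * pot (volume : Measure E).toSphere (Kf γ ε) G x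
      ∂(volume : Measure E).toSphere =
      m * nm (volume : Measure E).toSphere p F * nm (volume : Measure E).toSphere p G)
    (ξ η : sphere (0 : E) 1) :
    0 ≤ ((F ξ - F (sig e ξ)) * inner ℝ e (ξ : E)) * ((G η - G (sig e η)) * inner ℝ e (η : E)) := by
  have aF := adm_of_continuous hF hF0
  have aG := adm_of_continuous hG hG0
  have h := hmin _ _ (pol_adm (e := e) aF) (pol_adm (e := e) aG)
  rw [pol_nm he aF, pol_nm he aG, ← heq] at h
  obtain ⟨i1, e1⟩ := form_sig e hγ (ε := ε) aF aG
  obtain ⟨i2, e2⟩ := form_sig e hγ (ε := ε) (pol_adm (e := e) aF) (pol_adm (e := e) aG)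
  set y : sphere (0 : E) 1 × sphere (0 : E) 1 → ℝ := fun z =>
    (F z.1 - F (sig e z.1)) * (G z.2 - G (sig e z.2)) *
      (Kf γ ε z.1 z.2 - Kf γ ε z.1 (sig e z.2)) with hy
  have hyc : Continuous y := by
    have hσ := sig_continuous e
    have k1 : Continuous fun z : sphere (0 : E) 1 × sphere (0 : E) 1 => Kf γ ε z.1 z.2 :=
      Kf_continuous hγ ε
    have k2 : Continuous fun z : sphere (0 : E) 1 × sphere (0 : E) 1 => Kf γ ε z.1 (sig e z.2) :=
      (Kf_continuous hγ ε).comp (by fun_prop : Continuous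
        fun z : sphere (0 : E) 1 × sphere (0 : E) 1 => (z.1, sig e z.2))
    fun_prop
  have hsub := integral_sub i1 i2
  rw [← e1, ← e2] at hsub
  have hD : ∀ z : sphere (0 : E) 1 × sphere (0 : E) 1,
      ((F z.1 + F (sig e z.1)) * (G z.2 + G (sig e z.2)) *
        (Kf γ ε z.1 z.2 + Kf γ ε z.1 (sig e z.2)) +
      (F z.1 - F (sig e z.1)) * (G z.2 - G (sig e z.2)) *
        (Kf γ ε z.1 z.2 - Kf γ ε z.1 (sig e z.2))) -
      ((pol e F z.1 + pol e F (sig e z.1)) * (pol e G z.2 + pol e G (sig e z.2)) *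
        (Kf γ ε z.1 z.2 + Kf γ ε z.1 (sig e z.2)) +
      (pol e F z.1 - pol e F (sig e z.1)) * (pol e G z.2 - pol e G (sig e z.2)) *
        (Kf γ ε z.1 z.2 - Kf γ ε z.1 (sig e z.2))) = y z + |y z| := by
    intro z
    rw [pol_add he, pol_add he, pol_diff he hγ]
    simp only [hy]; ring
  have i3 := i1.sub i2
  simp only [hD] at hsub
  have i4 : Integrable (fun z => y z + |y z|)
      ((volume : Measure E).toSphere.prod (volume : Measure E).toSphere) :=
    i3.congr (ae_of_all _ hD)
  have hnn : ∀ z, 0 ≤ y z + |y z| := fun z => by linarith [neg_abs_le (y z)]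
  have h0 : ∫ z, (y z + |y z|) ∂((volume : Measure E).toSphere.prod (volume : Measure E).toSphere)
      = 0 := le_antisymm (by linarith) (integral_nonneg hnn)
  rw [integral_eq_zero_iff_of_nonneg hnn i4] at h0
  have h1 : (fun z => y z + |y z|) = 0 :=
    (Continuous.ae_eq_iff_eq _ (hyc.add hyc.abs) continuous_zero).1 h0
  have h2 : y (ξ, η) ≤ 0 := by
    have := congrFun h1 (ξ, η)
    simp only [Pi.zero_apply] at this
    linarith [abs_nonneg (y (ξ, η))]
  simp only [hy] at h2
  have hs := Kf_sig_sign he hγ ε ξ η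
  rcases lt_trichotomy (inner ℝ e (ξ : E) * inner ℝ e (η : E)) 0 with h3 | h3 | h3
  · have := hs.2 h3
    have : (F ξ - F (sig e ξ)) * (G η - G (sig e η)) ≤ 0 := by
      by_contra hc
      push Not at hc
      nlinarith
    nlinarith
  · have : ((F ξ - F (sig e ξ)) * inner ℝ e (ξ : E)) * ((G η - G (sig e η)) * inner ℝ e (η : E)) =
      ((F ξ - F (sig e ξ)) * (G η - G (sig e η))) * (inner ℝ e (ξ : E) * inner ℝ e (η : E)) := by
      ring
    rw [this, h3, mul_zero]
  · have := hs.1 h3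
    have : 0 ≤ (F ξ - F (sig e ξ)) * (G η - G (sig e η)) := by
      by_contra hc
      push Not at hc
      nlinarith
    nlinarith

theorem opt_sig (e : E) (γ ε p : ℝ) {G : sphere (0 : E) 1 → ℝ} (h : ∀ ξ, G (sig e ξ) = G ξ)
    (ξ : sphere (0 : E) 1) : opt (volume : Measure E).toSphere (Kf γ ε) p G (sig e ξ) =
      opt (volume : Measure E).toSphere (Kf γ ε) p G ξ := by
  unfold opt
  congr 1
  unfold pot
  rw [← isoS_integral (rf e)]
  refine integral_congr_ae (ae_of_all _ fun η => ?_)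
  change Kf γ ε (sig e ξ) (sig e η) * G (sig e η) = _
  rw [h]; simp only [Kf, dist_sig_sig]

theorem sym_of_min [Nontrivial E] {n : ℕ} (hn : Module.finrank ℝ E = n + 1) {e : E} (he : ‖e‖ = 1)
    {F G : sphere (0 : E) 1 → ℝ} (hF : Continuous F) (hF0 : ∀ ξ, 0 < F ξ)
    (hG : Continuous G) (hG0 : ∀ ξ, 0 < G ξ) {γ ε m p : ℝ} (hγ : 0 < γ) (hε : 0 < ε)
    (hp : p * (n + γ) = n)
    (hmin : ∀ F' G', Adm F' → Adm G' → m * nm (volume : Measure E).toSphere p F' *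
      nm (volume : Measure E).toSphere p G' ≤
      ∫ x, F' x * pot (volume : Measure E).toSphere (Kf γ ε) G' x ∂(volume : Measure E).toSphere)
    (heq : ∫ x, F x * pot (volume : Measure E).toSphere (Kf γ ε) G x
      ∂(volume : Measure E).toSphere =
      m * nm (volume : Measure E).toSphere p F * nm (volume : Measure E).toSphere p G)
    (hμ : (volume : Measure E).toSphere ≠ 0)
    (hopt : F = opt (volume : Measure E).toSphere (Kf γ ε) p G) (ξ : sphere (0 : E) 1) :
    F (sig e ξ) = F ξ := by
  by_contra hne
  have hsign := pol_sign he hF hF0 hG hG0 hγ hmin heq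
  have hmom := conf_moment hn he hF hF0 hG hG0 hγ hε hp hmin heq
  have hintg : ∀ {f : sphere (0 : E) 1 → ℝ}, Continuous f →
      Integrable f (volume : Measure E).toSphere := fun hf =>
    hf.integrable_of_hasCompactSupport (HasCompactSupport.of_compactSpace _)
  have hσ := sig_continuous e
  have half : ∀ {f : sphere (0 : E) 1 → ℝ}, Continuous f →
      ∫ η, (f η - f (sig e η)) * inner ℝ e (η : E) ∂(volume : Measure E).toSphere =
      2 * ∫ η, f η * inner ℝ e (η : E) ∂(volume : Measure E).toSphere := by
    intro f hf
    have c1 : Continuous fun η : sphere (0 : E) 1 => f η * inner ℝ e (η : E) := by fun_prop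
    have c2 : Continuous fun η : sphere (0 : E) 1 => f (sig e η) * inner ℝ e (sig e η : E) := by
      fun_prop
    have h1 := integral_add (hintg c1) (hintg c2)
    have h2 := isoS_integral (rf e) (fun η => f η * inner ℝ e (η : E))
    change ∫ η, f (sig e η) * inner ℝ e (sig e η : E) ∂_ = _ at h2
    rw [h2, ← two_mul] at h1
    rw [← h1]
    refine integral_congr_ae (ae_of_all _ fun η => ?_)
    simp only [inner_sig he]; ring
  have cf : Continuous fun η : sphere (0 : E) 1 => (F η - F (sig e η)) * inner ℝ e (η : E) := by
    fun_prop
  have cg : Continuous fun η : sphere (0 : E) 1 => (G η - G (sig e η)) * inner ℝ e (η : E) := by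
    fun_prop
  have hIF := half hF
  have hIG := half hG
  have nz : ∀ (f : sphere (0 : E) 1 → ℝ) (η : sphere (0 : E) 1), f (sig e η) ≠ f η →
      (f η - f (sig e η)) * inner ℝ e (η : E) ≠ 0 := by
    intro f η hf
    refine mul_ne_zero (sub_ne_zero.2 hf.symm) fun h0 => hf ?_
    rw [sig_eq_self he h0]
  obtain ⟨η0, hη0⟩ : ∃ η, G (sig e η) ≠ G η := by
    by_contra hc
    push Not at hc
    exact hne (by rw [hopt]; exact opt_sig e γ ε p hc ξ)
  have n1 := nz F ξ hne
  have n2 := nz G η0 hη0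
  have pF := (adm_of_continuous hF hF0).integral_pos hμ
  have pG := (adm_of_continuous hG hG0).integral_pos hμ
  set IF := ∫ η, F η * inner ℝ e (η : E) ∂(volume : Measure E).toSphere
  set IG := ∫ η, G η * inner ℝ e (η : E) ∂(volume : Measure E).toSphere
  have hprod : ∀ η, 0 ≤ IF * ((G η - G (sig e η)) * inner ℝ e (η : E)) := by
    intro η
    have : 0 ≤ ∫ x, ((F x - F (sig e x)) * inner ℝ e (x : E)) *
        ((G η - G (sig e η)) * inner ℝ e (η : E)) ∂(volume : Measure E).toSphere :=
      integral_nonneg fun x => hsign x η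
    rw [integral_mul_const, hIF] at this
    linarith
  have hprod2 : 0 ≤ IF * IG := by
    have : 0 ≤ ∫ η, IF * ((G η - G (sig e η)) * inner ℝ e (η : E)) ∂(volume : Measure E).toSphere :=
      integral_nonneg hprod
    rw [integral_const_mul, hIG] at this
    linarith
  have hIF0 : IF = 0 := by
    have h1 : IF * IF * (∫ η, G η ∂(volume : Measure E).toSphere) +
      (∫ η, F η ∂(volume : Measure E).toSphere) * (IF * IG) = 0 := by
      linear_combination IF * hmom
    have h2 := _root_.mul_nonneg pF.le hprod2
    have h3 := _root_.mul_nonneg (mul_self_nonneg IF) pG.le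
    have h4 : IF * IF * (∫ η, G η ∂(volume : Measure E).toSphere) = 0 := by linarith
    exact mul_self_eq_zero.1 ((mul_eq_zero.1 h4).resolve_right pG.ne')
  have hz : ∫ x, ((F x - F (sig e x)) * inner ℝ e (x : E)) *
        ((G η0 - G (sig e η0)) * inner ℝ e (η0 : E)) ∂(volume : Measure E).toSphere = 0 := by
    rw [integral_mul_const, hIF, hIF0]; simp
  have cfg := cf.mul_const ((G η0 - G (sig e η0)) * inner ℝ e (η0 : E))
  rw [integral_eq_zero_iff_of_nonneg (fun x => hsign x η0) (hintg cfg)] at hz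
  have := congrFun ((Continuous.ae_eq_iff_eq _ cfg continuous_zero).1 hz) ξ
  exact mul_ne_zero n1 n2 this

theorem exists_sig (ξ η : sphere (0 : E) 1) (hne : ξ ≠ η) : ∃ e : E, ‖e‖ = 1 ∧ sig e ξ = η := by
  have h0 : (ξ : E) - η ≠ 0 := sub_ne_zero.2 fun h => hne (Subtype.ext h)
  have h1 : 0 < ‖(ξ : E) - η‖ := norm_pos_iff.2 h0
  have hn : ‖‖(ξ : E) - η‖⁻¹ • ((ξ : E) - η)‖ = 1 := by
    rw [norm_smul, norm_inv, norm_norm, inv_mul_cancel₀ h1.ne']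
  refine ⟨‖(ξ : E) - η‖⁻¹ • ((ξ : E) - η), hn, Subtype.ext ?_⟩
  rw [sig_val hn, smul_smul, inner_smul_left]
  have h2 : ‖(ξ : E) - η‖ ^ 2 = 2 * inner ℝ ((ξ : E) - η) (ξ : E) := by
    rw [norm_sub_sq_real, inner_sub_left, real_inner_self_eq_norm_sq]
    simp only [norm_eq_of_mem_sphere]
    rw [real_inner_comm]; ring
  have h3 : 2 * ((starRingEnd ℝ) ‖(ξ : E) - η‖⁻¹ * inner ℝ ((ξ : E) - η) (ξ : E)) *
      ‖(ξ : E) - η‖⁻¹ = 1 := by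
    rw [conj_trivial]; field_simp; linarith
  rw [h3, one_smul]; simp

end Refl
end RHLS

namespace RHLS
section Core

variable {E : Type*} [NormedAddCommGroup E] [InnerProductSpace ℝ E] [FiniteDimensional ℝ E]
  [MeasurableSpace E] [BorelSpace E]

theorem core [Nontrivial E] {n : ℕ} (hn : Module.finrank ℝ E = n + 1) {γ p q A : ℝ} (hγ : 0 < γ)
    (hp : p * (n + γ) = n) (hp0 : 0 < p) (hp1 : p < 1) (hq : q = p / (p - 1))
    (hA : ∀ ξ : sphere (0 : E) 1, ∫ η, dist ξ η ^ (2 * γ) ∂(volume : Measure E).toSphere = A)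
    {F G : sphere (0 : E) 1 → ℝ} (hF : Adm F) (hG : Adm G) :
    A * (volume : Measure E).toSphere.real Set.univ ^ (1 / q - 1 / p) *
      nm (volume : Measure E).toSphere p F * nm (volume : Measure E).toSphere p G ≤
    ∫ x, F x * pot (volume : Measure E).toSphere (Kf γ 0) G x ∂(volume : Measure E).toSphere := by
  have hμ : (volume : Measure E).toSphere ≠ 0 := Measure.toSphere_ne_zero _
  have : Nonempty (sphere (0 : E) 1) := (NormedSpace.sphere_nonempty.2 zero_le_one).to_subtype
  set μ := (volume : Measure E).toSphere with hμd
  have hS : 0 < μ.real Set.univ := by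
    rw [Measure.real, ENNReal.toReal_pos_iff]
    exact ⟨pos_iff_ne_zero.2 (by simpa using hμ), measure_lt_top _ _⟩
  have step : ∀ ε > 0, A * μ.real Set.univ ^ (1 / q - 1 / p) * nm μ p F * nm μ p G ≤
      (∫ x, F x * pot μ (Kf γ 0) G x ∂μ) + ε * ((∫ x, F x ∂μ) * ∫ x, G x ∂μ) := by
    intro ε hε
    have hK := Kf_continuous (E := E) hγ ε
    have hsymm : ∀ x y : sphere (0 : E) 1, Kf γ ε x y = Kf γ ε y x := fun x y => by
      unfold Kf; rw [dist_comm]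
    have hKε : ∀ x y : sphere (0 : E) 1, ε ≤ Kf γ ε x y := fun x y => by
      unfold Kf
      have : 0 ≤ dist x y ^ (2 * γ) := by positivity
      linarith
    obtain ⟨m, F0, G0, cF, cG, aF, aG, hmin, heq, hopt⟩ :=
      exists_min_pair (μ := μ) hK hsymm hε hKε hμ hp0 hp1 hq
    obtain ⟨ξ0⟩ := (inferInstance : Nonempty (sphere (0 : E) 1))
    have hconst : ∀ ξ, F0 ξ = F0 ξ0 := by
      intro ξ
      by_cases h : ξ0 = ξ
      · rw [h]
      obtain ⟨e, he, hs⟩ := exists_sig ξ0 ξ h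
      rw [← hs]
      exact sym_of_min hn he cF aF.pos cG aG.pos hγ hε hp hmin heq hμ hopt ξ0
    have hc := aF.pos ξ0
    obtain ⟨c, hcd⟩ : ∃ c, c = F0 ξ0 := ⟨_, rfl⟩
    rw [← hcd] at hc
    have hF0 : F0 = fun _ => c := funext fun ξ => by rw [hconst, hcd]
    subst hF0
    have hpot : ∀ ξ, pot μ (Kf γ ε) (fun _ => c) ξ = c * (A + ε * μ.real Set.univ) := by
      intro ξ
      have hi : Integrable (fun η => dist ξ η ^ (2 * γ)) μ :=
        Continuous.integrable_of_hasCompactSupport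
          ((continuous_const.dist continuous_id).rpow_const fun _ => Or.inr (by positivity))
          (HasCompactSupport.of_compactSpace _)
      unfold pot Kf
      rw [integral_mul_const, integral_add hi (integrable_const _), hA]
      simp; ring
    have h1 : ∫ x, (fun _ => c) x * pot μ (Kf γ ε) G0 x ∂μ =
        c * (A + ε * μ.real Set.univ) * ∫ x, G0 x ∂μ := by
      rw [form_symm hK hsymm aF aG]
      simp only [hpot]
      rw [integral_mul_const, mul_comm]
    have h2 := rev_holder (μ := μ) hp0 hp1 hq hμ aG (Adm.const (X := sphere (0 : E) 1) one_pos)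
    simp only [Real.one_rpow, integral_const, smul_eq_mul, mul_one] at h2
    have h3 : nm μ p (fun _ : sphere (0 : E) 1 => c) = c * μ.real Set.univ ^ (1 / p) := by
      unfold nm
      rw [integral_const, smul_eq_mul, Real.mul_rpow hS.le (by positivity), ← Real.rpow_mul hc.le,
        mul_one_div_cancel hp0.ne', Real.rpow_one, mul_comm]
    have hA0 : 0 ≤ A := by rw [← hA ξ0]; exact integral_nonneg fun η => by positivity
    have hG0 := nm_pos hμ aG p
    have hSp := Real.rpow_pos_of_pos hS (1 / p)
    have hSq := Real.rpow_pos_of_pos hS (1 / q)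
    have hm : A * μ.real Set.univ ^ (1 / q - 1 / p) ≤ m := by
      rw [Real.rpow_sub hS, mul_div_assoc', div_le_iff₀ hSp]
      rw [heq, h3] at h1
      have h4 : A * (nm μ p G0 * μ.real Set.univ ^ (1 / q)) ≤
          (A + ε * μ.real Set.univ) * ∫ x, G0 x ∂μ := by
        have hGi := aG.integral_pos hμ
        have : 0 ≤ ε * μ.real Set.univ := by positivity
        calc _ ≤ A * ∫ x, G0 x ∂μ := mul_le_mul_of_nonneg_left h2 hA0
          _ ≤ _ := mul_le_mul_of_nonneg_right (by linarith) hGi.le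
      have h5 : c * nm μ p G0 * (A * μ.real Set.univ ^ (1 / q)) ≤
          c * nm μ p G0 * (m * μ.real Set.univ ^ (1 / p)) := by
        have := mul_le_mul_of_nonneg_left h4 hc.le
        linarith
      exact le_of_mul_le_mul_left h5 (_root_.mul_pos hc hG0)
    have h6 := hmin F G hF hG
    rw [form_Kf hγ ε hF hG] at h6
    refine le_trans ?_ h6
    have := nm_pos hμ hF p
    have := nm_pos hμ hG p
    gcongr
  refine le_of_forall_pos_le_add fun δ hδ => ?_
  have hFG := _root_.mul_pos (hF.integral_pos hμ) (hG.integral_pos hμ)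
  have := step (δ / ((∫ x, F x ∂μ) * ∫ x, G x ∂μ)) (by positivity)
  rwa [div_mul_cancel₀ _ hFG.ne'] at this

/-- the inequality for admissible functions, with the dual norm -/
theorem core_dual [Nontrivial E] {n : ℕ} (hn : Module.finrank ℝ E = n + 1) {γ p q A : ℝ} (hγ : 0 < γ)
    (hp : p * (n + γ) = n) (hp0 : 0 < p) (hp1 : p < 1) (hq : q = p / (p - 1))
    (hA : ∀ ξ : sphere (0 : E) 1, ∫ η, dist ξ η ^ (2 * γ) ∂(volume : Measure E).toSphere = A)
    (hA0 : 0 < A)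
    {F : sphere (0 : E) 1 → ℝ} (hF : Adm F) :
    Adm (pot (volume : Measure E).toSphere (Kf γ 0) F) ∧
    A * (volume : Measure E).toSphere.real Set.univ ^ (1 / q - 1 / p) *
      nm (volume : Measure E).toSphere p F ≤
    nm (volume : Measure E).toSphere q (pot (volume : Measure E).toSphere (Kf γ 0) F) := by
  have hμ : (volume : Measure E).toSphere ≠ 0 := Measure.toSphere_ne_zero _
  have hK := Kf_continuous (E := E) hγ 0
  set μ := (volume : Measure E).toSphere with hμd
  have hadm : Adm (pot μ (Kf γ 0) F) := by
    refine adm_of_continuous (pot_continuous hK hF) fun x => ?_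
    obtain ⟨hm, a, b, ha, hab⟩ := id hF
    have h1 : ∫ y, dist x y ^ (2 * γ) * a ∂μ ≤ pot μ (Kf γ 0) F x := by
      refine integral_mono ?_ (kernel_mul_integrable hK hF x) fun y => ?_
      · have := kernel_mul_integrable (μ := μ) hK (Adm.const ha) x
        simpa [Kf] using this
      · simp only [Kf, add_zero]
        exact mul_le_mul_of_nonneg_left (hab y).1 (by positivity)
    rw [integral_mul_const, hA] at h1
    exact (_root_.mul_pos hA0 ha).trans_le h1
  refine ⟨hadm, ?_⟩
  have hG : Adm (fun x => pot μ (Kf γ 0) F x ^ (1 / (p - 1))) := hadm.rpow _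
  have h := core hn hγ hp hp0 hp1 hq hA hG hF
  rw [holder_eq hp0 hp1 hq hμ hadm] at h
  have hpos := nm_pos hμ hG p
  refine le_of_mul_le_mul_left (le_trans (le_of_eq ?_) h) hpos
  ring

end Core
end RHLS

namespace RHLS
section Const

theorem lintegral_split (n : ℕ) {h : ℝ × ℝ → ℝ≥0∞} (hh : Measurable h) :
    ∫⁻ y : EuclideanSpace ℝ (Fin (n + 1)), h (y 0, ‖y‖ ^ 2) =
      ∫⁻ u : ℝ, ∫⁻ z : EuclideanSpace ℝ (Fin n), h (u, u ^ 2 + ‖z‖ ^ 2) := by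
  have h1 := (PiLp.volume_preserving_toLp (Fin (n + 1))).lintegral_comp
    (f := fun y : EuclideanSpace ℝ (Fin (n + 1)) => h (y 0, ‖y‖ ^ 2)) (hh.comp (by fun_prop))
  rw [← h1]
  have h2 := (volume_preserving_piFinSuccAbove (fun _ : Fin (n + 1) => ℝ) 0).symm.lintegral_comp
    (f := fun y : Fin (n + 1) → ℝ => h ((WithLp.toLp 2 y : EuclideanSpace ℝ (Fin (n + 1))) 0,
      ‖(WithLp.toLp 2 y : EuclideanSpace ℝ (Fin (n + 1)))‖ ^ 2)) (hh.comp (by fun_prop))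
  rw [← h2]
  have e : ∀ z : ℝ × (Fin n → ℝ), h ((WithLp.toLp 2 ((MeasurableEquiv.piFinSuccAbove
      (fun _ : Fin (n + 1) => ℝ) 0).symm z) : EuclideanSpace ℝ (Fin (n + 1))) 0,
      ‖(WithLp.toLp 2 ((MeasurableEquiv.piFinSuccAbove
      (fun _ : Fin (n + 1) => ℝ) 0).symm z) : EuclideanSpace ℝ (Fin (n + 1)))‖ ^ 2) =
      h (z.1, z.1 ^ 2 + ‖(WithLp.toLp 2 z.2 : EuclideanSpace ℝ (Fin n))‖ ^ 2) := by
    intro z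
    rw [EuclideanSpace.norm_sq_eq, EuclideanSpace.norm_sq_eq, Fin.sum_univ_succ]
    simp [MeasurableEquiv.piFinSuccAbove, Fin.insertNthEquiv]
  simp only [e]
  have hm : Measurable fun z : ℝ × (Fin n → ℝ) =>
      h (z.1, z.1 ^ 2 + ‖(WithLp.toLp 2 z.2 : EuclideanSpace ℝ (Fin n))‖ ^ 2) :=
    hh.comp (by fun_prop)
  change ∫⁻ z, _ ∂((volume : Measure ℝ).prod (volume : Measure (Fin n → ℝ))) = _
  rw [lintegral_prod _ hm.aemeasurable]
  refine lintegral_congr fun u => ?_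
  exact (PiLp.volume_preserving_toLp (Fin n)).lintegral_comp
    (f := fun y : EuclideanSpace ℝ (Fin n) => h (u, u ^ 2 + ‖y‖ ^ 2)) (hh.comp (by fun_prop))

theorem lintegral_gauss (n : ℕ) {b : ℝ} (hb : 0 < b) :
    ∫⁻ z : EuclideanSpace ℝ (Fin n), ENNReal.ofReal (Real.exp (-b * ‖z‖ ^ 2)) =
      ENNReal.ofReal ((Real.pi / b) ^ ((n : ℝ) / 2)) := by
  have h := GaussianFourier.integral_rexp_neg_mul_sq_norm (V := EuclideanSpace ℝ (Fin n)) hb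
  rw [finrank_euclideanSpace_fin] at h
  rw [← h, ofReal_integral_eq_lintegral_ofReal]
  · by_contra hc
    rw [integral_undef hc] at h
    have : 0 < (Real.pi / b) ^ ((n : ℝ) / 2) := by positivity
    linarith
  · exact ae_of_all _ fun z => (Real.exp_pos _).le

theorem lintegral_gamma {a r : ℝ} (ha : 0 < a) (hr : 0 < r) :
    ∫⁻ t in Set.Ioi (0 : ℝ), ENNReal.ofReal (t ^ (a - 1) * Real.exp (-(r * t))) =
      ENNReal.ofReal ((1 / r) ^ a * Real.Gamma a) := by
  have h := Real.integral_rpow_mul_exp_neg_mul_Ioi ha hr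
  rw [← h, ofReal_integral_eq_lintegral_ofReal]
  · by_contra hc
    rw [integral_undef hc] at h
    have := Real.Gamma_pos_of_pos ha
    have : 0 < (1 / r) ^ a * Real.Gamma a := by positivity
    linarith
  · refine (ae_restrict_mem measurableSet_Ioi).mono fun t ht => ?_
    have : 0 < t := ht
    simp only [Pi.zero_apply]; positivity

theorem J_eval (n : ℕ) {s : ℝ} (hs : 0 < s) :
    ∫⁻ y in {y : EuclideanSpace ℝ (Fin (n + 1)) | 0 < y 0},
      ENNReal.ofReal ((y 0) ^ (s - 1) * Real.exp (-(‖y‖ ^ 2 / y 0))) =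
      ENNReal.ofReal (Real.pi ^ ((n : ℝ) / 2) * Real.Gamma (s + n / 2)) := by
  have hms : MeasurableSet {y : EuclideanSpace ℝ (Fin (n + 1)) | 0 < y 0} :=
    measurableSet_lt measurable_const (by fun_prop)
  have hmh : MeasurableSet {w : ℝ × ℝ | 0 < w.1} := measurableSet_lt measurable_const measurable_fst
  have hm0 : Measurable fun w : ℝ × ℝ => ENNReal.ofReal (w.1 ^ (s - 1) * Real.exp (-(w.2 / w.1))) := by
    fun_prop
  have h := lintegral_split n (hm0.indicator hmh)
  rw [← lintegral_indicator hms]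
  have e1 : ∀ y : EuclideanSpace ℝ (Fin (n + 1)), {y : EuclideanSpace ℝ (Fin (n + 1)) | 0 < y 0}.indicator
      (fun y => ENNReal.ofReal ((y 0) ^ (s - 1) * Real.exp (-(‖y‖ ^ 2 / y 0)))) y =
      {w : ℝ × ℝ | 0 < w.1}.indicator
        (fun w : ℝ × ℝ => ENNReal.ofReal (w.1 ^ (s - 1) * Real.exp (-(w.2 / w.1)))) (y 0, ‖y‖ ^ 2) :=
    fun y => rfl
  rw [lintegral_congr e1, h]
  have e2 : ∀ u : ℝ, ∫⁻ z : EuclideanSpace ℝ (Fin n), {w : ℝ × ℝ | 0 < w.1}.indicator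
        (fun w : ℝ × ℝ => ENNReal.ofReal (w.1 ^ (s - 1) * Real.exp (-(w.2 / w.1))))
          (u, u ^ 2 + ‖z‖ ^ 2) = (Set.Ioi (0 : ℝ)).indicator (fun u => ENNReal.ofReal
            (Real.pi ^ ((n : ℝ) / 2)) *
            ENNReal.ofReal (u ^ (s + n / 2 - 1) * Real.exp (-(1 * u)))) u := by
    intro u
    by_cases hu : 0 < u
    · rw [Set.indicator_of_mem (Set.mem_Ioi.2 hu)]
      have e3 : ∀ z : EuclideanSpace ℝ (Fin n), {w : ℝ × ℝ | 0 < w.1}.indicator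
        (fun w : ℝ × ℝ => ENNReal.ofReal (w.1 ^ (s - 1) * Real.exp (-(w.2 / w.1))))
          (u, u ^ 2 + ‖z‖ ^ 2) = ENNReal.ofReal (u ^ (s - 1) * Real.exp (-u)) *
            ENNReal.ofReal (Real.exp (-(1 / u) * ‖z‖ ^ 2)) := by
        intro z
        rw [Set.indicator_of_mem (by exact hu), ← ENNReal.ofReal_mul (by positivity), mul_assoc,
          ← Real.exp_add]
        congr 3
        field_simp; ring
      rw [lintegral_congr e3, lintegral_const_mul _ (by fun_prop), lintegral_gauss n (by positivity),
        ← ENNReal.ofReal_mul (by positivity), ← ENNReal.ofReal_mul (by positivity)]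
      congr 1
      have : Real.pi / (1 / u) = Real.pi * u := by field_simp
      rw [this, Real.mul_rpow Real.pi_pos.le hu.le,
        show s + (n : ℝ) / 2 - 1 = (s - 1) + n / 2 by ring, Real.rpow_add hu, one_mul]
      ring
    · rw [Set.indicator_of_notMem (by simpa using hu)]
      have e3 : ∀ z : EuclideanSpace ℝ (Fin n), {w : ℝ × ℝ | 0 < w.1}.indicator
        (fun w : ℝ × ℝ => ENNReal.ofReal (w.1 ^ (s - 1) * Real.exp (-(w.2 / w.1))))
          (u, u ^ 2 + ‖z‖ ^ 2) = 0 := fun z => Set.indicator_of_notMem (by exact hu) _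
      simp [e3]
  rw [lintegral_congr e2, lintegral_indicator measurableSet_Ioi,
    lintegral_const_mul _ (by fun_prop), lintegral_gamma (by positivity) one_pos,
    ← ENNReal.ofReal_mul (by positivity)]
  simp

section
variable {E : Type*} [NormedAddCommGroup E] [InnerProductSpace ℝ E] [FiniteDimensional ℝ E]
  [MeasurableSpace E] [BorelSpace E]

theorem I_eq_J {e : E} (he : ‖e‖ = 1) {s : ℝ} (hs : 0 < s) :
    ∫⁻ x : E, ENNReal.ofReal ((‖x‖ - inner ℝ e x) ^ s * Real.exp (-(2 * ‖x‖)) / ‖x‖) =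
    ∫⁻ y in {y : E | 0 < inner ℝ e y},
      ENNReal.ofReal ((inner ℝ e y) ^ (s - 1) * Real.exp (-(‖y‖ ^ 2 / inner ℝ e y))) := by
  have hms : MeasurableSet {x : E | inner ℝ e x < ‖x‖} :=
    measurableSet_lt (by fun_prop) (by fun_prop)
  have hne : ∀ x ∈ {x : E | inner ℝ e x < ‖x‖}, x ≠ 0 := by
    rintro x hx rfl
    simp at hx
  have hu : ∀ x : E, inner ℝ e (shear e (-2) 1 x) = ‖x‖ - inner ℝ e x := fun x => by
    rw [inner_shear he]; ring
  have hN : ∀ x : E, ‖shear e (-2) 1 x‖ ^ 2 = 2 * ‖x‖ * (‖x‖ - inner ℝ e x) := fun x => by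
    rw [norm_sq_shear he]; ring
  have himg : shear e (-2) 1 '' {x : E | inner ℝ e x < ‖x‖} = {y : E | 0 < inner ℝ e y} := by
    ext y
    constructor
    · rintro ⟨x, hx, rfl⟩
      have hx' : inner ℝ e x < ‖x‖ := hx
      change 0 < inner ℝ e (shear e (-2) 1 x)
      rw [hu]; linarith
    · intro hy
      have hy' : 0 < inner ℝ e y := hy
      set c := ‖y‖ ^ 2 / (2 * inner ℝ e y) with hc
      have hc0 : 0 ≤ c := by positivity
      have hcy : 2 * c * inner ℝ e y = ‖y‖ ^ 2 := by rw [hc]; field_simp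
      have h1 : inner ℝ e (y + (c - 2 * inner ℝ e y) • e) = c - inner ℝ e y := by
        rw [inner_add_right, inner_smul_right, real_inner_self_eq_norm_sq, he]; ring
      have h2 : ‖y + (c - 2 * inner ℝ e y) • e‖ = c := by
        rw [← sq_eq_sq₀ (norm_nonneg _) hc0, norm_add_sq_real, norm_smul, inner_smul_right, he,
          real_inner_comm e y, mul_one, Real.norm_eq_abs, sq_abs]
        linear_combination -hcy
      refine ⟨y + (c - 2 * inner ℝ e y) • e, ?_, ?_⟩
      · change inner ℝ e _ < ‖_‖
        rw [h1, h2]; linarith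
      · rw [shear, h1, h2, add_assoc, ← add_smul]
        have : c - 2 * inner ℝ e y + (-2 * (c - inner ℝ e y) + 1 * c) = 0 := by ring
        rw [this, zero_smul, add_zero]
  have hinj : Set.InjOn (shear e (-2) 1) {x : E | inner ℝ e x < ‖x‖} := by
    intro x hx y hy hxy
    have hx' : inner ℝ e x < ‖x‖ := hx
    have a1 := hu x
    have a2 := hN x
    rw [hxy, hu] at a1
    rw [hxy, hN, ← a1] at a2
    have hy' : inner ℝ e y < ‖y‖ := hy
    have a3 : ‖y‖ = ‖x‖ := by
      have : (‖y‖ - inner ℝ e y) * (‖y‖ - ‖x‖) = 0 := by linear_combination a2 / 2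
      rcases mul_eq_zero.1 this with h | h <;> linarith
    have a4 : inner ℝ e y = (inner ℝ e x : ℝ) := by linarith
    have : x + ((-2) * inner ℝ e x + 1 * ‖x‖) • e = y + ((-2) * inner ℝ e y + 1 * ‖y‖) • e := hxy
    rw [a3, a4] at this
    exact add_right_cancel this
  have key := lintegral_image_eq_lintegral_abs_det_fderiv_mul (volume : Measure E) hms
    (f := shear e (-2) 1) (f' := shearDeriv e (-2) 1)
    (fun x hx => (shear_hasFDerivAt _ _ _ (hne x hx)).hasFDerivWithinAt) hinj
    (fun y => ENNReal.ofReal ((inner ℝ e y) ^ (s - 1) * Real.exp (-(‖y‖ ^ 2 / inner ℝ e y))))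
  rw [himg] at key
  rw [key, ← lintegral_indicator hms]
  refine lintegral_congr fun x => ?_
  by_cases hx : inner ℝ e x < ‖x‖
  · have h0 : 0 < ‖x‖ - inner ℝ e x := by linarith
    have h1 : 0 < ‖x‖ := norm_pos_iff.2 (hne x hx)
    rw [Set.indicator_of_mem (by exact hx), ← ENNReal.ofReal_mul (abs_nonneg _), hu, hN]
    congr 1
    have hd : (shearDeriv e (-2) 1 x).det = -((‖x‖ - inner ℝ e x) / ‖x‖) := by
      rw [shearDeriv_det he]; field_simp; ring
    rw [hd, abs_neg, abs_of_pos (by positivity), Real.rpow_sub_one h0.ne',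
      mul_div_cancel_right₀ _ h0.ne']
    field_simp
  · rw [Set.indicator_of_notMem (by exact hx)]
    have : ‖x‖ - inner ℝ e x = 0 := by
      have := (abs_le.1 (abs_inner_le he x)).2
      push Not at hx
      linarith
    rw [this, Real.zero_rpow hs.ne']
    simp

theorem I_polar [Nontrivial E] {n : ℕ} (hn : Module.finrank ℝ E = n + 1) {e : E} (he : ‖e‖ = 1)
    {s : ℝ} (hs : 0 < s) :
    ∫⁻ x : E, ENNReal.ofReal ((‖x‖ - inner ℝ e x) ^ s * Real.exp (-(2 * ‖x‖)) / ‖x‖) =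
    (∫⁻ ξ : sphere (0 : E) 1, ENNReal.ofReal ((1 - inner ℝ e (ξ : E)) ^ s)
      ∂(volume : Measure E).toSphere) * ENNReal.ofReal ((1 / 2) ^ (n + s) * Real.Gamma (n + s)) := by
  rw [lintegral_polar (by fun_prop), hn, Nat.add_sub_cancel, ← lintegral_mul_const _ (by fun_prop)]
  refine lintegral_congr fun ξ => ?_
  have h0 : 0 ≤ 1 - inner ℝ e (ξ : E) := by
    have := (abs_le.1 (abs_inner_le he (ξ : E))).2
    rw [norm_eq_of_mem_sphere] at this
    linarith
  have hm : Measurable fun r : ℝ => ENNReal.ofReal ((‖r • (ξ : E)‖ - inner ℝ e (r • (ξ : E))) ^ s *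
    Real.exp (-(2 * ‖r • (ξ : E)‖)) / ‖r • (ξ : E)‖) := by fun_prop
  rw [lintegral_volumeIoiPow n hm, ← lintegral_gamma (by positivity) two_pos,
    ← lintegral_const_mul _ (by fun_prop)]
  refine setLIntegral_congr_fun measurableSet_Ioi fun r hr => ?_
  have hr0 : 0 < r := hr
  rw [← ENNReal.ofReal_mul (by positivity), ← ENNReal.ofReal_mul (by positivity), norm_smul,
    norm_eq_of_mem_sphere, Real.norm_of_nonneg hr0.le, inner_smul_right, mul_one]
  congr 1
  rw [show r - r * inner ℝ e (ξ : E) = r * (1 - inner ℝ e (ξ : E)) by ring,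
    Real.mul_rpow hr0.le h0, Real.rpow_sub_one hr0.ne', Real.rpow_add hr0, Real.rpow_natCast]
  field_simp

end

theorem sphere_moment {n : ℕ} {s : ℝ} (hs : 0 < s) :
    ∫ ξ : sphere (0 : EuclideanSpace ℝ (Fin (n + 1))) 1,
      (1 - inner ℝ (EuclideanSpace.single 0 1) (ξ : EuclideanSpace ℝ (Fin (n + 1)))) ^ s
      ∂(volume : Measure (EuclideanSpace ℝ (Fin (n + 1)))).toSphere =
    2 ^ (n + s) * Real.pi ^ ((n : ℝ) / 2) * Real.Gamma (s + n / 2) / Real.Gamma (n + s) := by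
  have he : ‖(EuclideanSpace.single 0 1 : EuclideanSpace ℝ (Fin (n + 1)))‖ = 1 := by simp
  have h1 := I_polar (n := n) (by simp) he hs
  rw [I_eq_J he hs] at h1
  have hi : ∀ y : EuclideanSpace ℝ (Fin (n + 1)), inner ℝ (EuclideanSpace.single 0 1) y = y 0 :=
    fun y => by simp [EuclideanSpace.inner_single_left]
  simp only [hi] at h1 ⊢
  rw [J_eval n hs] at h1
  have hG := Real.Gamma_pos_of_pos (by positivity : 0 < (n : ℝ) + s)
  have hG2 := Real.Gamma_pos_of_pos (by positivity : 0 < s + (n : ℝ) / 2)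
  rw [integral_eq_lintegral_of_nonneg_ae]
  · have h2 := congrArg ENNReal.toReal h1
    rw [ENNReal.toReal_mul, ENNReal.toReal_ofReal (by positivity),
      ENNReal.toReal_ofReal (by positivity)] at h2
    rw [eq_div_iff hG.ne', mul_assoc, h2]
    have : (2 : ℝ) ^ ((n : ℝ) + s) * (1 / 2) ^ ((n : ℝ) + s) = 1 := by
      rw [← Real.mul_rpow (by norm_num) (by norm_num)]; norm_num
    linear_combination (-(∫⁻ (ξ : sphere (0 : EuclideanSpace ℝ (Fin (n + 1))) 1),
      ENNReal.ofReal ((1 - (ξ : EuclideanSpace ℝ (Fin (n + 1))) 0) ^ s)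
      ∂(volume : Measure (EuclideanSpace ℝ (Fin (n + 1)))).toSphere).toReal * Real.Gamma (n + s)) * this
  · refine ae_of_all _ fun ξ => Real.rpow_nonneg ?_ _
    have := (abs_le.1 (abs_inner_le he (ξ : EuclideanSpace ℝ (Fin (n + 1))))).2
    rw [norm_eq_of_mem_sphere, hi] at this
    linarith
  · exact Measurable.aestronglyMeasurable (by fun_prop)

/-- total mass of the kernel -/
theorem kernel_mass {n : ℕ} {γ : ℝ} (hγ : 0 < γ)
    (ξ : sphere (0 : EuclideanSpace ℝ (Fin (n + 1))) 1) :
    ∫ η, dist ξ η ^ (2 * γ) ∂(volume : Measure (EuclideanSpace ℝ (Fin (n + 1)))).toSphere =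
    2 ^ (n + 2 * γ) * Real.pi ^ ((n : ℝ) / 2) * Real.Gamma (γ + n / 2) / Real.Gamma (n + γ) := by
  have he : ‖(EuclideanSpace.single 0 1 : EuclideanSpace ℝ (Fin (n + 1)))‖ = 1 := by simp
  let e0 : sphere (0 : EuclideanSpace ℝ (Fin (n + 1))) 1 := ⟨EuclideanSpace.single 0 1, by simp⟩
  have h0 : ∫ η, dist e0 η ^ (2 * γ) ∂(volume : Measure (EuclideanSpace ℝ (Fin (n + 1)))).toSphere =
    2 ^ (n + 2 * γ) * Real.pi ^ ((n : ℝ) / 2) * Real.Gamma (γ + n / 2) / Real.Gamma (n + γ) := by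
    have h1 : ∀ η, dist e0 η ^ (2 * γ) = 2 ^ γ *
        (1 - inner ℝ (EuclideanSpace.single 0 1) (η : EuclideanSpace ℝ (Fin (n + 1)))) ^ γ := by
      intro η
      have h2 : dist e0 η ^ 2 =
          2 * (1 - inner ℝ (EuclideanSpace.single 0 1) (η : EuclideanSpace ℝ (Fin (n + 1)))) := by
        rw [Subtype.dist_eq, dist_eq_norm, norm_sub_sq_real]
        simp only [norm_eq_of_mem_sphere]
        ring
      have h3 : 0 ≤ 1 - inner ℝ (EuclideanSpace.single 0 1) (η : EuclideanSpace ℝ (Fin (n + 1))) := by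
        have := sq_nonneg (dist e0 η)
        linarith
      rw [Real.rpow_mul dist_nonneg, Real.rpow_ofNat, h2, Real.mul_rpow (by norm_num) h3]
    simp only [h1]
    rw [integral_const_mul, sphere_moment hγ, show (n : ℝ) + 2 * γ = γ + (n + γ) by ring,
      Real.rpow_add two_pos γ]
    ring
  by_cases h : ξ = e0
  · rw [h, h0]
  · obtain ⟨e, -, hs⟩ := exists_sig ξ e0 h
    have h3 := isoS_integral (rf e)
      (fun η : sphere (0 : EuclideanSpace ℝ (Fin (n + 1))) 1 => dist e0 η ^ (2 * γ))
    rw [← h0, ← h3]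
    refine integral_congr_ae (ae_of_all _ fun η => ?_)
    change _ = dist e0 (sig e η) ^ (2 * γ)
    rw [← hs, dist_sig_sig]

theorem sphere_area {n : ℕ} (hn : 1 ≤ n) :
    (volume : Measure (EuclideanSpace ℝ (Fin (n + 1)))).toSphere.real Set.univ =
    2 ^ (n : ℝ) * Real.pi ^ ((n : ℝ) / 2) * Real.Gamma (n / 2) / Real.Gamma n := by
  have hn0 : (0 : ℝ) < n := by exact_mod_cast hn
  rw [Measure.real, Measure.toSphere_apply_univ, EuclideanSpace.volume_ball]
  simp only [finrank_euclideanSpace_fin, Fintype.card_fin, ENNReal.ofReal_one, one_pow, one_mul,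
    ENNReal.toReal_mul]
  have hG := Real.Gamma_pos_of_pos hn0
  have hG2 := Real.Gamma_pos_of_pos (by positivity : 0 < (n : ℝ) / 2)
  have hG3 := Real.Gamma_pos_of_pos (by positivity : 0 < (n : ℝ) / 2 + 1 / 2)
  have hadd : Real.Gamma (((n + 1 : ℕ) : ℝ) / 2 + 1) =
      (n + 1) / 2 * Real.Gamma ((n : ℝ) / 2 + 1 / 2) := by
    rw [Real.Gamma_add_one (by positivity)]
    push_cast
    rw [show ((n : ℝ) + 1) / 2 = (n : ℝ) / 2 + 1 / 2 by ring]
  have hdup := Real.Gamma_mul_Gamma_add_half ((n : ℝ) / 2)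
  rw [show 2 * ((n : ℝ) / 2) = n by ring, Real.rpow_sub two_pos, Real.rpow_one] at hdup
  rw [hadd, ENNReal.toReal_ofReal (by positivity), ENNReal.toReal_natCast]
  have hpi : √Real.pi ^ (n + 1) = Real.pi ^ ((n : ℝ) / 2) * √Real.pi := by
    rw [pow_succ, Real.sqrt_eq_rpow, ← Real.rpow_natCast (Real.pi ^ (1 / 2 : ℝ)),
      ← Real.rpow_mul Real.pi_pos.le]
    congr 2; ring
  rw [hpi]
  have h2 : (0 : ℝ) < 2 ^ (n : ℝ) := by positivity
  have hdup2 : Real.Gamma (n / 2) * Real.Gamma ((n : ℝ) / 2 + 1 / 2) * 2 ^ (n : ℝ) =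
      2 * Real.Gamma n * √Real.pi := by
    rw [hdup]; field_simp
  rw [show (n : ℝ) / 2 + 1 / 2 = ((n : ℝ) + 1) / 2 by ring] at hdup2 hG3 ⊢
  push_cast
  field_simp
  linear_combination -hdup2

theorem const_eq {n : ℕ} (hn : 1 ≤ n) {α p q γ : ℝ} (hα : (n : ℝ) < α)
    (hγ : γ = (α - n) / 2)
    (hp : p = 2 * n / ((n : ℝ) + α)) (hq : q = 2 * n / ((n : ℝ) - α)) :
    2 ^ (n + 2 * γ) * Real.pi ^ ((n : ℝ) / 2) * Real.Gamma (γ + n / 2) / Real.Gamma (n + γ) *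
      (2 ^ (n : ℝ) * Real.pi ^ ((n : ℝ) / 2) * Real.Gamma (n / 2) / Real.Gamma n) ^ (1 / q - 1 / p) =
    Real.pi ^ (((n : ℝ) - α) / 2) * (Real.Gamma (α / 2) / Real.Gamma (((n : ℝ) + α) / 2)) *
              (Real.Gamma ((n : ℝ) / 2) / Real.Gamma (n : ℝ)) ^ (-(α / (n : ℝ))) := by
  have hn0 : (0 : ℝ) < n := by exact_mod_cast hn
  have hG := Real.Gamma_pos_of_pos hn0
  have hG2 := Real.Gamma_pos_of_pos (by positivity : 0 < (n : ℝ) / 2)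
  have h1 : 1 / q - 1 / p = -(α / n) := by
    have : (n : ℝ) - α ≠ 0 := by linarith
    have : (n : ℝ) + α ≠ 0 := by linarith
    rw [hp, hq]; field_simp; ring
  rw [h1, mul_div_assoc _ (Real.Gamma (n / 2)), Real.mul_rpow (by positivity) (by positivity),
    Real.mul_rpow (by positivity) (by positivity), ← Real.rpow_mul (by positivity),
    ← Real.rpow_mul Real.pi_pos.le]
  have e1 : (n : ℝ) + 2 * γ = α := by rw [hγ]; ring
  have e2 : γ + (n : ℝ) / 2 = α / 2 := by rw [hγ]; ring
  have e3 : (n : ℝ) + γ = (n + α) / 2 := by rw [hγ]; ring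
  have e4 : (n : ℝ) * -(α / n) = -α := by field_simp
  have e5 : (n : ℝ) / 2 * -(α / n) = -(α / 2) := by field_simp
  rw [e1, e2, e3, e4, e5, show ((n : ℝ) - α) / 2 = n / 2 + -(α / 2) by ring,
    Real.rpow_add Real.pi_pos, Real.rpow_neg two_pos.le]
  have : (0 : ℝ) < 2 ^ α := by positivity
  field_simp

end Const
end RHLS

namespace RHLS

instance sphereMeasure_finite (n : ℕ) : IsFiniteMeasure (sphereMeasure n) := by
  unfold sphereMeasure; infer_instance

theorem rpow_antitone {q : ℝ} (hq : q < 0) {x y : ℝ≥0∞} (h : x ≤ y) : y ^ q ≤ x ^ q := by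
  have h1 := ENNReal.rpow_le_rpow h (by linarith : 0 ≤ -q)
  rw [ENNReal.rpow_neg, ENNReal.rpow_neg] at h1
  exact ENNReal.inv_le_inv.1 h1

theorem adm_case (n : ℕ) (hn : 1 ≤ n) (α p q N : ℝ)
    (hα : (n : ℝ) < α)
    (hp : p = 2 * n / ((n : ℝ) + α)) (hq : q = 2 * n / ((n : ℝ) - α))
    (hN : N = Real.pi ^ (((n : ℝ) - α) / 2) *
      (Real.Gamma (α / 2) / Real.Gamma (((n : ℝ) + α) / 2)) *
              (Real.Gamma ((n : ℝ) / 2) / Real.Gamma (n : ℝ)) ^ (-(α / (n : ℝ))))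
    (hN0 : 0 < N)
    {F : sphere (0 : EuclideanSpace ℝ (Fin (n + 1))) 1 → ℝ} (hF : Adm F) :
    ∫⁻ ξ, (sphereRiesz n α F ξ) ^ q ∂(sphereMeasure n) ≤
      (ENNReal.ofReal N * (∫⁻ ξ, ENNReal.ofReal (F ξ) ^ p ∂(sphereMeasure n)) ^ (1 / p)) ^ q := by
  have hn0 : (0 : ℝ) < n := by exact_mod_cast hn
  have hp0 : 0 < p := by rw [hp]; apply div_pos <;> linarith
  have hp1 : p < 1 := by rw [hp, div_lt_one (by linarith)]; linarith
  have hq0 : q < 0 := by rw [hq]; exact div_neg_of_pos_of_neg (by linarith) (by linarith)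
  set γ : ℝ := (α - n) / 2 with hγ
  have hγ0 : 0 < γ := by rw [hγ]; linarith
  have hpn : p * (n + γ) = n := by
    have : (n : ℝ) + α ≠ 0 := by linarith
    rw [hp, hγ]; field_simp; ring
  have hqp : q = p / (p - 1) := by
    have h1 : (n : ℝ) + α ≠ 0 := by linarith
    have h2 : (n : ℝ) - α ≠ 0 := by linarith
    have h3 : p - 1 = (n - α) / (n + α) := by rw [hp]; field_simp; ring
    rw [h3, hq, hp]; field_simp
  have hG1 := Real.Gamma_pos_of_pos (by positivity : 0 < γ + (n : ℝ) / 2)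
  have hG2 := Real.Gamma_pos_of_pos (by positivity : 0 < (n : ℝ) + γ)
  obtain ⟨hA, hle⟩ := core_dual (E := EuclideanSpace ℝ (Fin (n + 1))) (n := n) (by simp) hγ0 hpn hp0
    hp1 hqp (fun ξ => kernel_mass hγ0 ξ) (by positivity) hF
  rw [sphere_area hn, const_eq hn hα hγ hp hq, ← hN] at hle
  change N * nm (sphereMeasure n) p F ≤ nm (sphereMeasure n) q (pot (sphereMeasure n) (Kf γ 0) F) at hle
  change Adm (pot (sphereMeasure n) (Kf γ 0) F) at hA
  set G := pot (sphereMeasure n) (Kf γ 0) F with hG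
  have hR : ∀ ξ, sphereRiesz n α F ξ = ENNReal.ofReal (G ξ) := by
    intro ξ
    obtain ⟨hFm, a, b, ha, hab⟩ := hF
    have hK : ∀ η, Kf γ 0 ξ η * F η =  F η * dist (ξ : EuclideanSpace ℝ (Fin (n + 1)))
        (η : EuclideanSpace ℝ (Fin (n + 1))) ^ (α - n) := by
      intro η
      rw [Kf, add_zero, mul_comm, Subtype.dist_eq, hγ, mul_div_cancel₀ _ (two_ne_zero)]
    have hnn : ∀ η, 0 ≤ Kf γ 0 ξ η * F η := fun η => by
      rw [hK]; exact mul_nonneg (ha.le.trans (hab η).1) (Real.rpow_nonneg dist_nonneg _)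
    rw [hG, pot, ofReal_integral_eq_lintegral_ofReal _ (ae_of_all _ hnn), sphereRiesz]
    · simp only [hK]
    · by_contra hni
      obtain ⟨-, c, d, hc, hcd⟩ := hA
      have := (hcd ξ).1
      rw [hG, pot, integral_undef hni] at this
      linarith
  have hGp : ∀ ξ, 0 < G ξ := hA.pos
  have hsp : ∀ (r : ℝ) {H : sphere (0 : EuclideanSpace ℝ (Fin (n + 1))) 1 → ℝ}, Adm H →
      ∫⁻ ξ, ENNReal.ofReal (H ξ) ^ r ∂(sphereMeasure n) =
        ENNReal.ofReal (∫ ξ, H ξ ^ r ∂(sphereMeasure n)) := by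
    intro r H hH
    rw [ofReal_integral_eq_lintegral_ofReal (hH.rpow r).integrable
      (ae_of_all _ fun ξ => Real.rpow_nonneg (hH.pos ξ).le _)]
    exact lintegral_congr fun ξ => ENNReal.ofReal_rpow_of_pos (hH.pos ξ)
  have hpos : ∀ (r : ℝ) {H : sphere (0 : EuclideanSpace ℝ (Fin (n + 1))) 1 → ℝ}, Adm H →
      0 < ∫ ξ, H ξ ^ r ∂(sphereMeasure n) := by
    intro r H hH
    have hm : (sphereMeasure n) ≠ 0 := by
      intro h0
      have h1 := sphere_area hn
      have h2 : (volume : Measure (EuclideanSpace ℝ (Fin (n + 1)))).toSphere = 0 := h0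
      rw [h2] at h1
      have hG := Real.Gamma_pos_of_pos hn0
      have hG2 := Real.Gamma_pos_of_pos (by positivity : 0 < (n : ℝ) / 2)
      have : 0 < 2 ^ (n : ℝ) * Real.pi ^ ((n : ℝ) / 2) * Real.Gamma (n / 2) / Real.Gamma n := by
        positivity
      rw [← h1] at this
      simp at this
    rw [integral_pos_iff_support_of_nonneg (fun ξ => Real.rpow_nonneg (hH.pos ξ).le _)
      (hH.rpow r).integrable]
    have : Function.support (fun ξ => H ξ ^ r) = Set.univ := by
      ext ξ
      simp [(Real.rpow_pos_of_pos (hH.pos ξ) r).ne']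
    rw [this]
    simpa using hm
  have h1 := hpos p hF
  have h2 := hpos q hA
  simp only [hR]
  rw [hsp q hA, hsp p hF, ENNReal.ofReal_rpow_of_pos h1, ← ENNReal.ofReal_mul hN0.le]
  have h3 : ENNReal.ofReal (∫ ξ, G ξ ^ q ∂(sphereMeasure n)) =
      ENNReal.ofReal (nm (sphereMeasure n) q G) ^ q := by
    rw [nm, ← ENNReal.ofReal_rpow_of_pos h2, ← ENNReal.rpow_mul, one_div_mul_cancel hq0.ne,
      ENNReal.rpow_one]
  rw [h3]
  exact rpow_antitone hq0 (ENNReal.ofReal_le_ofReal hle)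

theorem main (n : ℕ) (hn : 1 ≤ n) (α p q N : ℝ)
    (hα : (n : ℝ) < α)
    (hp : p = 2 * n / ((n : ℝ) + α)) (hq : q = 2 * n / ((n : ℝ) - α))
    (hN : N = Real.pi ^ (((n : ℝ) - α) / 2) *
      (Real.Gamma (α / 2) / Real.Gamma (((n : ℝ) + α) / 2)) *
              (Real.Gamma ((n : ℝ) / 2) / Real.Gamma (n : ℝ)) ^ (-(α / (n : ℝ))))
    (F : sphere (0 : EuclideanSpace ℝ (Fin (n + 1))) 1 → ℝ)
    (hFm : Measurable F) (hF0 : ∀ ξ, 0 ≤ F ξ)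
    (hFi : Integrable (fun ξ => |F ξ| ^ p) (sphereMeasure n)) :
    ENNReal.ofReal (N * (∫ ξ, |F ξ| ^ p ∂(sphereMeasure n)) ^ (1 / p)) ≤
        (∫⁻ ξ, (sphereRiesz n α F ξ) ^ q ∂(sphereMeasure n)) ^ (1 / q) := by
  have hn0 : (0 : ℝ) < n := by exact_mod_cast hn
  have hp0 : 0 < p := by rw [hp]; apply div_pos <;> linarith
  have hq0 : q < 0 := by rw [hq]; exact div_neg_of_pos_of_neg (by linarith) (by linarith)
  have hN0 : 0 < N := by
    have h1 := Real.Gamma_pos_of_pos hn0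
    have h2 := Real.Gamma_pos_of_pos (by positivity : 0 < (n : ℝ) / 2)
    have h3 := Real.Gamma_pos_of_pos (by linarith : 0 < α / 2)
    have h4 := Real.Gamma_pos_of_pos (by linarith : 0 < ((n : ℝ) + α) / 2)
    rw [hN]; positivity
  -- truncations
  let T : ℕ → sphere (0 : EuclideanSpace ℝ (Fin (n + 1))) 1 → ℝ := fun j ξ => min (F ξ) j
  let Fj : ℕ → sphere (0 : EuclideanSpace ℝ (Fin (n + 1))) 1 → ℝ := fun j ξ => T j ξ + 1 / ((j : ℝ) + 1)
  have hTm : ∀ j, Measurable (T j) := fun j => hFm.min measurable_const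
  have hT0 : ∀ j ξ, 0 ≤ T j ξ := fun j ξ => le_min (hF0 ξ) (Nat.cast_nonneg j)
  have hTmono : ∀ ξ, Monotone fun j => T j ξ := fun ξ i j hij =>
    min_le_min le_rfl (by exact_mod_cast hij)
  have hTlim : ∀ ξ, Filter.Tendsto (fun j => T j ξ) Filter.atTop (nhds (F ξ)) := by
    intro ξ
    refine tendsto_const_nhds.congr' ?_
    obtain ⟨k, hk⟩ := exists_nat_ge (F ξ)
    filter_upwards [Filter.eventually_ge_atTop k] with j hj
    exact (min_eq_left (hk.trans (by exact_mod_cast hj))).symm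
  have hadm : ∀ j, Adm (Fj j) := fun j => by
    refine ⟨(hTm j).add_const _, 1 / ((j : ℝ) + 1), j + 1 / ((j : ℝ) + 1), by positivity,
      fun ξ => ⟨?_, ?_⟩⟩
    · have := hT0 j ξ
      change _ ≤ T j ξ + _
      linarith
    · have : T j ξ ≤ j := min_le_right _ _
      change T j ξ + _ ≤ _
      linarith
  have hdm : ∀ ξ : sphere (0 : EuclideanSpace ℝ (Fin (n + 1))) 1, Measurable
      fun η : sphere (0 : EuclideanSpace ℝ (Fin (n + 1))) 1 =>
      dist (ξ : EuclideanSpace ℝ (Fin (n + 1))) (η : EuclideanSpace ℝ (Fin (n + 1))) ^ (α - n) := by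
    intro ξ
    exact (measurable_const.dist measurable_subtype_coe).pow_const _
  have hd0 : ∀ ξ η : sphere (0 : EuclideanSpace ℝ (Fin (n + 1))) 1, 0 ≤
      dist (ξ : EuclideanSpace ℝ (Fin (n + 1))) (η : EuclideanSpace ℝ (Fin (n + 1))) ^ (α - n) :=
    fun ξ η => Real.rpow_nonneg dist_nonneg _
  -- convergence of the potentials
  have hIlim : ∀ ξ, Filter.Tendsto (fun j => sphereRiesz n α (Fj j) ξ) Filter.atTop
      (nhds (sphereRiesz n α F ξ)) := by
    intro ξ
    have h1 : Filter.Tendsto (fun j => sphereRiesz n α (T j) ξ) Filter.atTop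
        (nhds (sphereRiesz n α F ξ)) := by
      refine lintegral_tendsto_of_tendsto_of_monotone
        (fun j => ((hTm j).mul (hdm ξ)).ennreal_ofReal.aemeasurable)
        (ae_of_all _ fun η i j hij => ?_) (ae_of_all _ fun η => ?_)
      · exact ENNReal.ofReal_le_ofReal (mul_le_mul_of_nonneg_right (hTmono η hij) (hd0 ξ η))
      · exact (ENNReal.continuous_ofReal.tendsto _).comp ((hTlim η).mul_const _)
    have hTd : ∀ j, Measurable fun η : sphere (0 : EuclideanSpace ℝ (Fin (n + 1))) 1 =>
        ENNReal.ofReal (T j η * dist (ξ : EuclideanSpace ℝ (Fin (n + 1)))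
          (η : EuclideanSpace ℝ (Fin (n + 1))) ^ (α - n)) :=
      fun j => Measurable.ennreal_ofReal ((hTm j).mul (hdm ξ))
    have h2 : ∀ j : ℕ, sphereRiesz n α (Fj j) ξ = sphereRiesz n α (T j) ξ +
        ENNReal.ofReal (1 / ((j : ℝ) + 1)) * sphereRiesz n α (fun _ => 1) ξ := by
      intro j
      rw [sphereRiesz, sphereRiesz, sphereRiesz,
        ← lintegral_const_mul _ (Measurable.ennreal_ofReal ((hdm ξ).const_mul 1)),
        ← lintegral_add_left (hTd j)]
      refine lintegral_congr fun η => ?_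
      have h5 : (0 : ℝ) ≤ 1 / ((j : ℝ) + 1) := by positivity
      rw [← ENNReal.ofReal_mul h5, ← ENNReal.ofReal_add (mul_nonneg (hT0 j η) (hd0 ξ η))
        (mul_nonneg h5 (mul_nonneg zero_le_one (hd0 ξ η)))]
      congr 1
      change (T j η + _) * _ = _
      ring
    have h3 : sphereRiesz n α (fun _ => 1) ξ ≠ ∞ := by
      refine ((lintegral_mono (g := fun _ => ENNReal.ofReal (2 ^ (α - n))) fun η => ?_).trans_lt
        ?_).ne
      · refine ENNReal.ofReal_le_ofReal ?_
        rw [one_mul]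
        refine Real.rpow_le_rpow dist_nonneg ?_ (by linarith)
        refine (dist_le_norm_add_norm _ _).trans ?_
        rw [norm_eq_of_mem_sphere, norm_eq_of_mem_sphere]; norm_num
      · rw [lintegral_const]
        exact ENNReal.mul_lt_top ENNReal.ofReal_lt_top (measure_lt_top _ _)
    have h4 : Filter.Tendsto (fun j : ℕ => ENNReal.ofReal (1 / ((j : ℝ) + 1)) *
        sphereRiesz n α (fun _ => 1) ξ) Filter.atTop (nhds 0) := by
      have := ENNReal.Tendsto.mul_const (b := sphereRiesz n α (fun _ => 1) ξ)
        ((ENNReal.continuous_ofReal.tendsto _).comp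
        (tendsto_one_div_add_atTop_nhds_zero_nat (𝕜 := ℝ))) (Or.inr h3)
      rw [ENNReal.ofReal_zero, zero_mul] at this
      exact this
    have := h1.add h4
    rw [add_zero] at this
    exact this.congr fun j => (h2 j).symm
  -- convergence of the norms
  have hPlim : Filter.Tendsto (fun j => ∫⁻ ξ, ENNReal.ofReal (T j ξ) ^ p ∂(sphereMeasure n))
      Filter.atTop (nhds (∫⁻ ξ, ENNReal.ofReal (F ξ) ^ p ∂(sphereMeasure n))) := by
    refine lintegral_tendsto_of_tendsto_of_monotone
        (fun j => ((hTm j).ennreal_ofReal.pow_const p).aemeasurable)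
        (ae_of_all _ fun η i j hij => ?_) (ae_of_all _ fun η => ?_)
    · exact ENNReal.rpow_le_rpow (ENNReal.ofReal_le_ofReal (hTmono η hij)) hp0.le
    · exact ((ENNReal.continuous_rpow_const.comp ENNReal.continuous_ofReal).tendsto _).comp (hTlim η)
  set Y : ℝ≥0∞ → ℝ≥0∞ := fun P => (ENNReal.ofReal N * P ^ (1 / p)) ^ q with hY
  have hYc : Continuous Y := by
    refine ENNReal.continuous_rpow_const.comp ?_
    exact (ENNReal.continuous_const_mul ENNReal.ofReal_ne_top).comp ENNReal.continuous_rpow_const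
  have hbound : ∀ j, ∫⁻ ξ, (sphereRiesz n α (Fj j) ξ) ^ q ∂(sphereMeasure n) ≤
      Y (∫⁻ ξ, ENNReal.ofReal (T j ξ) ^ p ∂(sphereMeasure n)) := by
    intro j
    refine (adm_case n hn α p q N hα hp hq hN hN0 (hadm j)).trans (rpow_antitone hq0 ?_)
    gcongr
    change _ ≤ _ + 1 / ((j : ℝ) + 1)
    have : (0 : ℝ) ≤ 1 / ((j : ℝ) + 1) := by positivity
    linarith
  have hRm : ∀ j, Measurable (sphereRiesz n α (Fj j)) := by
    intro j
    have : Measurable (Function.uncurry fun (ξ η : sphere (0 : EuclideanSpace ℝ (Fin (n + 1))) 1) =>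
        ENNReal.ofReal (Fj j η *
    dist (ξ : EuclideanSpace ℝ (Fin (n + 1))) (η : EuclideanSpace ℝ (Fin (n + 1))) ^ (α - n))) := by
      refine Measurable.ennreal_ofReal (Measurable.mul ((hadm j).1.comp measurable_snd) ?_)
      exact ((measurable_subtype_coe.comp measurable_fst).dist
        (measurable_subtype_coe.comp measurable_snd)).pow_const _
    exact this.lintegral_prod_right
  have hfin : ∫⁻ ξ, (sphereRiesz n α F ξ) ^ q ∂(sphereMeasure n) ≤
      Y (∫⁻ ξ, ENNReal.ofReal (F ξ) ^ p ∂(sphereMeasure n)) := by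
    calc ∫⁻ ξ, (sphereRiesz n α F ξ) ^ q ∂(sphereMeasure n)
        = ∫⁻ ξ, Filter.liminf (fun j => (sphereRiesz n α (Fj j) ξ) ^ q) Filter.atTop
            ∂(sphereMeasure n) := lintegral_congr fun ξ =>
          (((ENNReal.continuous_rpow_const (y := q)).tendsto _).comp (hIlim ξ)).liminf_eq.symm
      _ ≤ Filter.liminf (fun j => ∫⁻ ξ, (sphereRiesz n α (Fj j) ξ) ^ q ∂(sphereMeasure n))
            Filter.atTop := lintegral_liminf_le fun j => (hRm j).pow_const q
      _ ≤ Filter.liminf (fun j => Y (∫⁻ ξ, ENNReal.ofReal (T j ξ) ^ p ∂(sphereMeasure n)))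
            Filter.atTop := Filter.liminf_le_liminf (Filter.Eventually.of_forall hbound)
      _ = Y (∫⁻ ξ, ENNReal.ofReal (F ξ) ^ p ∂(sphereMeasure n)) :=
          ((hYc.tendsto _).comp hPlim).liminf_eq
  have hfin2 := rpow_antitone (q := 1 / q) (by rw [one_div]; exact inv_lt_zero.2 hq0) hfin
  refine le_trans (le_of_eq ?_) hfin2
  rw [hY]
  simp only
  rw [← ENNReal.rpow_mul, mul_one_div_cancel hq0.ne, ENNReal.rpow_one, ENNReal.ofReal_mul hN0.le]
  congr 1
  have hnn : ∀ ξ, 0 ≤ |F ξ| ^ p := fun ξ => Real.rpow_nonneg (abs_nonneg _) _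
  rw [← ENNReal.ofReal_rpow_of_nonneg (integral_nonneg hnn) (by positivity),
    ofReal_integral_eq_lintegral_ofReal hFi (ae_of_all _ hnn)]
  congr 1
  refine lintegral_congr fun ξ => ?_
  rw [abs_of_nonneg (hF0 ξ), ENNReal.ofReal_rpow_of_nonneg (hF0 ξ) hp0.le]

end RHLS

/-- **Sharp reversed HLS inequality on the sphere** (Theorem 1.2, inequality part):
for `1 ≤ n < α`, `p = 2n/(n+α)`, `q = 2n/(n-α)`, every nonnegative `F ∈ L^p(𝕊ⁿ)` satisfies
`‖Ĩ_α F‖_{L^q(𝕊ⁿ)} ≥ N*(n,α) ‖F‖_{L^p(𝕊ⁿ)}` with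
`N*(n,α) = π^((n-α)/2) Γ(α/2)/Γ((n+α)/2) (Γ(n/2)/Γ(n))^(-α/n)`. -/
theorem sharp_reversed_HLS_sphere (n : ℕ) (hn : 1 ≤ n) (α p q : ℝ)
    (hα : (n : ℝ) < α)
    (hp : p = 2 * n / ((n : ℝ) + α)) (hq : q = 2 * n / ((n : ℝ) - α)) :
    ∀ F : sphere (0 : EuclideanSpace ℝ (Fin (n + 1))) 1 → ℝ,
      Measurable F → (∀ ξ, 0 ≤ F ξ) →
      Integrable (fun ξ => |F ξ| ^ p) (sphereMeasure n) →
      ENNReal.ofReal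
          ((Real.pi ^ (((n : ℝ) - α) / 2) * (Real.Gamma (α / 2) / Real.Gamma (((n : ℝ) + α) / 2)) *
              (Real.Gamma ((n : ℝ) / 2) / Real.Gamma (n : ℝ)) ^ (-(α / (n : ℝ)))) *
            (∫ ξ, |F ξ| ^ p ∂(sphereMeasure n)) ^ (1 / p)) ≤
        (∫⁻ ξ, (sphereRiesz n α F ξ) ^ q ∂(sphereMeasure n)) ^ (1 / q) := by
  intro F hFm hF0 hFi
  exact RHLS.main n hn α p q _ hα hp hq rfl F hFm hF0 hFi
end
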